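/- arXiv:1812.06793 — 4 statements merged into one kernel-verified Lean document; each statement's English description precedes it below -/
import Mathlib

section
/- Let φ(λ) = a + bλ + ∫_{(0,∞)} (1 − e^{−λs}) ν(ds) be a Bernstein function, extended by the same formula to complex arguments with positive real part. If −φ'' ∈ WLSC(α−2, c, x₀) for some c ∈ (0,1], x₀ ≥ 0 and α > 0, then there exists C > 0 such that for all w > x₀ and all λ ∈ ℝ: Re(φ(w + iλ) − φ(w)) ≥ C · λ² · (−φ''(max{|λ|, w})). -/
open MeasureTheory Real Set

noncomputable section

/-- Weak lower scaling property at infinity. -/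
def WLSC (f : ℝ → ℝ) (θ c x₀ : ℝ) : Prop :=
  ∀ lam : ℝ, 1 ≤ lam → ∀ x : ℝ, x₀ < x → c * lam ^ θ * f x ≤ f (lam * x)

/-- The extension of the Bernstein function
`φ(λ) = a + bλ + ∫_{(0,∞)} (1 − e^{−λs}) ν(ds)` to complex arguments. -/
def phiC (a b : ℝ) (ν : Measure ℝ) (z : ℂ) : ℂ :=
  (a : ℂ) + (b : ℂ) * z + ∫ s in Ioi (0:ℝ), (1 - Complex.exp (-z * (s : ℂ))) ∂ν

/-! Write `M x = ∫ s² e^{-xs} ν(ds)`, so that `M = -φ''`, and let `m = max |λ| w`. The real part of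
`φ(w + iλ) - φ(w)` is the integral of the nonnegative function `e^{-ws} (1 - cos (λs))`. Where
`s ≤ 1 / m`, the bound `1 - cos t ≥ 2 t² / π²` shows that it is at least `2 λ² / π²` times
`s² e^{-ms}`. It remains to see that the part of `M m` coming from `s ≤ 1 / m` is a fixed fraction
of `M m`. If `s > 1 / m`, then `e^{-Lms} ≤ e^{1-L} e^{-ms}`, hence `M (L m)` exceeds that part by at
most `e^{1-L} M m`. By scaling, `M (L m) ≥ c L^θ M m`, and `e^{1-L} < c L^θ` once `L` is large. -/

section Estimates

lemma pow_mul_exp_neg_mul_le {x s : ℝ} (hx : 0 < x) (hs : 0 ≤ s) (n : ℕ) :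
    s ^ n * exp (-x * s) ≤ n.factorial / x ^ n := by
  have h := pow_div_factorial_le_exp (x := x * s) (by positivity) n
  rw [div_le_iff₀ (by positivity), mul_pow] at h
  rw [neg_mul, exp_neg, ← div_eq_mul_inv, div_le_div_iff₀ (by positivity) (by positivity)]
  linarith

lemma pow_succ_mul_exp_neg_mul_le_mul_min {x s : ℝ} (hx : 0 < x) (hs : 0 ≤ s) (n : ℕ) :
    s ^ (n + 1) * exp (-x * s) ≤
      (n.factorial / x ^ n + (n + 1).factorial / x ^ (n + 1)) * min 1 s := by
  have h_large := pow_mul_exp_neg_mul_le hx hs (n + 1)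
  have h_small : s ^ (n + 1) * exp (-x * s) ≤ n.factorial / x ^ n * s := by
    calc s ^ (n + 1) * exp (-x * s) = s ^ n * exp (-x * s) * s := by ring
      _ ≤ n.factorial / x ^ n * s := by gcongr; exact pow_mul_exp_neg_mul_le hx hs n
  rw [mul_min_of_nonneg _ _ (by positivity), le_min_iff, mul_one, add_mul]
  exact ⟨le_add_of_nonneg_of_le (by positivity) h_large,
    le_add_of_le_of_nonneg h_small (by positivity)⟩

lemma norm_one_sub_exp_le_two_mul_min {u : ℂ} (hu : u.re ≤ 0) :
    ‖1 - Complex.exp u‖ ≤ 2 * min 1 ‖u‖ := by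
  rcases le_total ‖u‖ 1 with h | h
  · rw [min_eq_right h, norm_sub_rev]
    exact Complex.norm_exp_sub_one_le h
  · calc ‖1 - Complex.exp u‖ ≤ ‖(1 : ℂ)‖ + ‖Complex.exp u‖ := norm_sub_le _ _
      _ ≤ 1 + 1 := by
        rw [norm_one, Complex.norm_exp]
        gcongr
        exact exp_le_one_iff.2 hu
      _ = 2 * min 1 ‖u‖ := by rw [min_eq_left h]; norm_num

lemma min_one_mul_le {r s : ℝ} (hr : 0 ≤ r) (hs : 0 ≤ s) :
    min 1 (r * s) ≤ (1 + r) * min 1 s := by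
  rw [mul_min_of_nonneg _ _ (by positivity)]
  exact min_le_min (by linarith) (by nlinarith)

lemma exists_exp_one_sub_lt_const_mul_rpow {c : ℝ} (hc : 0 < c) (θ : ℝ) :
    ∃ L : ℝ, 1 ≤ L ∧ exp (1 - L) < c * L ^ θ := by
  have h_decay := (isLittleO_exp_neg_mul_rpow_atTop one_pos θ).bound
    (show 0 < c / exp 2 by positivity)
  obtain ⟨L, hL, hL1⟩ := (h_decay.and (Filter.eventually_ge_atTop 1)).exists
  have hLpos : 0 < L := by linarith
  have hpow : 0 < L ^ θ := rpow_pos_of_pos hLpos θ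
  rw [norm_of_nonneg (exp_pos _).le, norm_of_nonneg hpow.le] at hL
  refine ⟨L, hL1, ?_⟩
  calc exp (1 - L) < exp (2 - L) := exp_lt_exp.2 (by linarith)
    _ = exp 2 * exp (-1 * L) := by rw [← exp_add]; ring_nf
    _ ≤ exp 2 * (c / exp 2 * L ^ θ) := by gcongr
    _ = c * L ^ θ := by field_simp

end Estimates

section LevyMeasure

variable {ν : Measure ℝ}

lemma integrableOn_min_one_of_lintegral_ne_top
    (hν : ∫⁻ s in Ioi (0 : ℝ), ENNReal.ofReal (min 1 s) ∂ν ≠ ⊤) :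
    IntegrableOn (fun s ↦ min 1 s) (Ioi 0) ν := by
  refine (lintegral_ofReal_ne_top_iff_integrable (by fun_prop) ?_).1 hν
  filter_upwards [ae_restrict_mem measurableSet_Ioi] with s (hs : 0 < s)
  exact le_min zero_le_one hs.le

variable (hν : IntegrableOn (fun s ↦ min 1 s) (Ioi 0) ν)
include hν

lemma integrableOn_of_norm_le_mul_min {E : Type*} [NormedAddCommGroup E] {f : ℝ → E} {K : ℝ}
    (hf : Continuous f) (hK : ∀ s, 0 < s → ‖f s‖ ≤ K * min 1 s) :
    IntegrableOn f (Ioi 0) ν :=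
  (hν.const_mul K).mono' hf.aestronglyMeasurable
    ((ae_restrict_mem measurableSet_Ioi).mono hK)

lemma integrableOn_pow_succ_mul_exp_neg_mul {x : ℝ} (hx : 0 < x) (n : ℕ) :
    IntegrableOn (fun s ↦ s ^ (n + 1) * exp (-x * s)) (Ioi 0) ν := by
  refine integrableOn_of_norm_le_mul_min hν
    (K := n.factorial / x ^ n + (n + 1).factorial / x ^ (n + 1)) (by fun_prop) fun s hs ↦ ?_
  rw [norm_of_nonneg (by positivity)]
  exact pow_succ_mul_exp_neg_mul_le_mul_min hx hs.le n

lemma integrableOn_one_sub_cexp_neg_mul {z : ℂ} (hz : 0 ≤ z.re) :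
    IntegrableOn (fun s : ℝ ↦ 1 - Complex.exp (-z * s)) (Ioi 0) ν := by
  refine integrableOn_of_norm_le_mul_min hν (K := 2 * (1 + ‖z‖)) (by fun_prop) fun s hs ↦ ?_
  have h_re : (-z * s).re ≤ 0 := by simpa using mul_nonneg hz hs.le
  calc ‖1 - Complex.exp (-z * s)‖ ≤ 2 * min 1 ‖-z * s‖ := norm_one_sub_exp_le_two_mul_min h_re
    _ = 2 * min 1 (‖z‖ * s) := by rw [norm_mul, norm_neg, Complex.norm_of_nonneg hs.le]
    _ ≤ 2 * ((1 + ‖z‖) * min 1 s) := by gcongr; exact min_one_mul_le (norm_nonneg z) hs.le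
    _ = 2 * (1 + ‖z‖) * min 1 s := by ring

lemma integrableOn_one_sub_exp_mul_cos {w : ℝ} (hw : 0 ≤ w) (lam : ℝ) :
    IntegrableOn (fun s ↦ 1 - exp (-w * s) * cos (lam * s)) (Ioi 0) ν := by
  have h := (integrableOn_one_sub_cexp_neg_mul hν (z := ⟨w, lam⟩) hw).re
  simpa [IntegrableOn, Complex.exp_re] using h

lemma integrableOn_one_sub_exp {x : ℝ} (hx : 0 ≤ x) :
    IntegrableOn (fun s ↦ 1 - exp (-x * s)) (Ioi 0) ν := by
  simpa using integrableOn_one_sub_exp_mul_cos hν hx 0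

lemma integrableOn_exp_mul_one_sub_cos {w : ℝ} (hw : 0 ≤ w) (lam : ℝ) :
    IntegrableOn (fun s ↦ exp (-w * s) * (1 - cos (lam * s))) (Ioi 0) ν := by
  have h := (integrableOn_one_sub_exp_mul_cos hν hw lam).sub (integrableOn_one_sub_exp hν hw)
  exact h.congr_fun (fun s _ ↦ by simp only [Pi.sub_apply]; ring) measurableSet_Ioi

lemma re_phiC (a b : ℝ) {w : ℝ} (hw : 0 ≤ w) (lam : ℝ) :
    (phiC a b ν (w + lam * Complex.I)).re =
      a + b * w + ∫ s in Ioi (0 : ℝ), (1 - exp (-w * s) * cos (lam * s)) ∂ν := by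
  have h_re := integral_re (𝕜 := ℂ)
    (integrableOn_one_sub_cexp_neg_mul hν (z := w + lam * Complex.I) (by simpa using hw))
  simp only [RCLike.re_to_complex] at h_re
  rw [phiC, Complex.add_re, ← h_re]
  simp [Complex.exp_re]

lemma re_phiC_sub (a b : ℝ) {w : ℝ} (hw : 0 ≤ w) (lam : ℝ) :
    (phiC a b ν (w + lam * Complex.I) - phiC a b ν w).re =
      ∫ s in Ioi (0 : ℝ), exp (-w * s) * (1 - cos (lam * s)) ∂ν := by
  have h_real := re_phiC hν a b hw 0
  simp only [Complex.ofReal_zero, zero_mul, add_zero, cos_zero, mul_one] at h_real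
  rw [Complex.sub_re, re_phiC hν a b hw, h_real, add_sub_add_left_eq_sub,
    ← integral_sub (integrableOn_one_sub_exp_mul_cos hν hw lam) (integrableOn_one_sub_exp hν hw)]
  congr 1 with s
  ring

lemma hasDerivAt_integral_of_hasDerivAt_pow_succ_mul_exp {F : ℝ → ℝ → ℝ} {k x : ℝ} {n : ℕ}
    (hx : 0 < x) (hF_cont : ∀ y, Continuous (F y)) (hF_int : IntegrableOn (F x) (Ioi 0) ν)
    (hF : ∀ y s, HasDerivAt (F · s) (k * (s ^ (n + 1) * exp (-y * s))) y) :
    HasDerivAt (fun y ↦ ∫ s in Ioi (0 : ℝ), F y s ∂ν)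
      (k * ∫ s in Ioi (0 : ℝ), s ^ (n + 1) * exp (-x * s) ∂ν) x := by
  rw [← integral_const_mul]
  refine (hasDerivAt_integral_of_dominated_loc_of_deriv_le
    (bound := fun s ↦ |k| * (s ^ (n + 1) * exp (-(x / 2) * s)))
    (Ioi_mem_nhds (half_lt_self hx)) (.of_forall fun y ↦ (hF_cont y).aestronglyMeasurable)
    hF_int (Continuous.aestronglyMeasurable (by fun_prop)) ?_
    ((integrableOn_pow_succ_mul_exp_neg_mul hν (half_pos hx) n).const_mul _)
    (.of_forall fun s y _ ↦ hF y s)).2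
  filter_upwards [ae_restrict_mem measurableSet_Ioi] with s (hs : 0 < s) y (hy : x / 2 < y)
  rw [norm_mul, norm_eq_abs k, norm_of_nonneg (by positivity)]
  gcongr

lemma hasDerivAt_integral_one_sub_exp {x : ℝ} (hx : 0 < x) :
    HasDerivAt (fun y ↦ ∫ s in Ioi (0 : ℝ), (1 - exp (-y * s)) ∂ν)
      (∫ s in Ioi (0 : ℝ), s * exp (-x * s) ∂ν) x := by
  have h := hasDerivAt_integral_of_hasDerivAt_pow_succ_mul_exp hν (k := 1) (n := 0) hx
    (F := fun y s ↦ 1 - exp (-y * s)) (fun y ↦ by fun_prop) (integrableOn_one_sub_exp hν hx.le)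
    fun y s ↦ (((hasDerivAt_id y).neg.mul_const s).exp.const_sub 1).congr_deriv (by simp; ring)
  simpa using h

lemma hasDerivAt_integral_mul_exp {x : ℝ} (hx : 0 < x) :
    HasDerivAt (fun y ↦ ∫ s in Ioi (0 : ℝ), s * exp (-y * s) ∂ν)
      (-∫ s in Ioi (0 : ℝ), s ^ 2 * exp (-x * s) ∂ν) x := by
  have h := hasDerivAt_integral_of_hasDerivAt_pow_succ_mul_exp hν (k := -1) (n := 1) hx
    (F := fun y s ↦ s * exp (-y * s)) (fun y ↦ by fun_prop)
    (by simpa using integrableOn_pow_succ_mul_exp_neg_mul hν hx 0)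
    fun y s ↦ (((hasDerivAt_id y).neg.mul_const s).exp.const_mul s).congr_deriv (by simp; ring)
  simpa using h

section BernsteinRepresentation

variable {φ : ℝ → ℝ} {a b : ℝ}
  (hφ : ∀ x : ℝ, 0 < x → φ x = a + b * x + ∫ s in Ioi (0 : ℝ), (1 - exp (-x * s)) ∂ν)
include hφ

lemma deriv_bernstein {x : ℝ} (hx : 0 < x) :
    deriv φ x = b + ∫ s in Ioi (0 : ℝ), s * exp (-x * s) ∂ν := by
  have h_rep := (((hasDerivAt_id x).const_mul b).const_add a).add
    (hasDerivAt_integral_one_sub_exp hν hx)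
  have h_eq : φ =ᶠ[nhds x] _ := Filter.eventuallyEq_of_mem (Ioi_mem_nhds hx) hφ
  simpa using (h_rep.congr_of_eventuallyEq h_eq).deriv

lemma neg_deriv_deriv_bernstein {x : ℝ} (hx : 0 < x) :
    -deriv (deriv φ) x = ∫ s in Ioi (0 : ℝ), s ^ 2 * exp (-x * s) ∂ν := by
  have h_rep := (hasDerivAt_integral_mul_exp hν hx).const_add b
  have h_eq : deriv φ =ᶠ[nhds x] _ :=
    Filter.eventuallyEq_of_mem (Ioi_mem_nhds hx) fun _ ↦ deriv_bernstein hν hφ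
  rw [(h_rep.congr_of_eventuallyEq h_eq).deriv, neg_neg]

end BernsteinRepresentation

lemma tail_integral_sq_mul_exp_le {m L : ℝ} (hm : 0 < m) (hL : 1 ≤ L) :
    ∫ s in Ioi (1 / m), s ^ 2 * exp (-(L * m) * s) ∂ν ≤
      exp (1 - L) * ∫ s in Ioi (0 : ℝ), s ^ 2 * exp (-m * s) ∂ν := by
  have h_tail : Ioi (1 / m) ⊆ Ioi 0 := Ioi_subset_Ioi (by positivity)
  have h_int := integrableOn_pow_succ_mul_exp_neg_mul hν hm 1
  have h_int_scaled := integrableOn_pow_succ_mul_exp_neg_mul hν (show 0 < L * m by positivity) 1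
  calc ∫ s in Ioi (1 / m), s ^ 2 * exp (-(L * m) * s) ∂ν
      ≤ ∫ s in Ioi (1 / m), exp (1 - L) * (s ^ 2 * exp (-m * s)) ∂ν := by
        refine setIntegral_mono_on (h_int_scaled.mono_set h_tail)
          ((h_int.mono_set h_tail).const_mul _) measurableSet_Ioi fun s hs ↦ ?_
        have h_one : 1 < m * s := (div_lt_iff₀' hm).1 hs
        rw [mul_left_comm, ← exp_add]
        gcongr
        nlinarith
    _ = exp (1 - L) * ∫ s in Ioi (1 / m), s ^ 2 * exp (-m * s) ∂ν := integral_const_mul _ _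
    _ ≤ exp (1 - L) * ∫ s in Ioi (0 : ℝ), s ^ 2 * exp (-m * s) ∂ν := by
        gcongr
        exact .of_forall fun s ↦ by positivity

lemma integral_sq_mul_exp_le_truncated_add {m L : ℝ} (hm : 0 < m) (hL : 1 ≤ L) :
    ∫ s in Ioi (0 : ℝ), s ^ 2 * exp (-(L * m) * s) ∂ν ≤
      ∫ s in Ioc 0 (1 / m), s ^ 2 * exp (-m * s) ∂ν +
        exp (1 - L) * ∫ s in Ioi (0 : ℝ), s ^ 2 * exp (-m * s) ∂ν := by
  have h_inv : 0 ≤ 1 / m := by positivity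
  have h_int := integrableOn_pow_succ_mul_exp_neg_mul hν hm 1
  have h_int_scaled := integrableOn_pow_succ_mul_exp_neg_mul hν (show 0 < L * m by positivity) 1
  have h_small : ∫ s in Ioc 0 (1 / m), s ^ 2 * exp (-(L * m) * s) ∂ν ≤
      ∫ s in Ioc 0 (1 / m), s ^ 2 * exp (-m * s) ∂ν := by
    refine setIntegral_mono_on (h_int_scaled.mono_set Ioc_subset_Ioi_self)
      (h_int.mono_set Ioc_subset_Ioi_self) measurableSet_Ioc fun s hs ↦ ?_
    have := hs.1
    gcongr
    exact le_mul_of_one_le_left hm.le hL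
  rw [← Ioc_union_Ioi_eq_Ioi h_inv, setIntegral_union Ioc_disjoint_Ioi_same measurableSet_Ioi
    (h_int_scaled.mono_set Ioc_subset_Ioi_self)
    (h_int_scaled.mono_set (Ioi_subset_Ioi h_inv)), Ioc_union_Ioi_eq_Ioi h_inv]
  exact add_le_add h_small (tail_integral_sq_mul_exp_le hν hm hL)

lemma truncated_integral_sq_mul_exp_le {w lam m : ℝ} (hw : 0 ≤ w) (hm : 0 < m)
    (hwm : w ≤ m) (hlam : |lam| ≤ m) :
    2 / π ^ 2 * lam ^ 2 * ∫ s in Ioc 0 (1 / m), s ^ 2 * exp (-m * s) ∂ν ≤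
      ∫ s in Ioi (0 : ℝ), exp (-w * s) * (1 - cos (lam * s)) ∂ν := by
  have h_int := integrableOn_exp_mul_one_sub_cos hν hw lam
  have h_nonneg (s : ℝ) : 0 ≤ exp (-w * s) * (1 - cos (lam * s)) :=
    mul_nonneg (exp_pos _).le (sub_nonneg.2 (cos_le_one _))
  rw [← integral_const_mul]
  calc ∫ s in Ioc 0 (1 / m), 2 / π ^ 2 * lam ^ 2 * (s ^ 2 * exp (-m * s)) ∂ν
      ≤ ∫ s in Ioc 0 (1 / m), exp (-w * s) * (1 - cos (lam * s)) ∂ν := by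
        refine setIntegral_mono_on (((integrableOn_pow_succ_mul_exp_neg_mul hν hm 1).mono_set
          Ioc_subset_Ioi_self).const_mul _) (h_int.mono_set Ioc_subset_Ioi_self)
          measurableSet_Ioc fun s ⟨hs, hsm⟩ ↦ ?_
        have h_arg : |lam * s| ≤ π := by
          calc |lam * s| = |lam| * s := by rw [abs_mul, abs_of_pos hs]
            _ ≤ m * (1 / m) := by gcongr
            _ ≤ π := by rw [mul_one_div_cancel hm.ne']; linarith [pi_gt_three]
        calc 2 / π ^ 2 * lam ^ 2 * (s ^ 2 * exp (-m * s))
            = exp (-m * s) * (2 / π ^ 2 * (lam * s) ^ 2) := by ring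
          _ ≤ exp (-w * s) * (1 - cos (lam * s)) := by
            gcongr
            linarith [cos_le_one_sub_mul_cos_sq h_arg]
    _ ≤ ∫ s in Ioi (0 : ℝ), exp (-w * s) * (1 - cos (lam * s)) ∂ν :=
        setIntegral_mono_set h_int (.of_forall h_nonneg) Ioc_subset_Ioi_self.eventuallyLE

lemma mul_integral_sq_mul_exp_le_re_phiC_sub (a b : ℝ) {w lam m L k : ℝ} (hw : 0 ≤ w) (hm : 0 < m)
    (hwm : w ≤ m) (hlam : |lam| ≤ m) (hL : 1 ≤ L)
    (hk : k * ∫ s in Ioi (0 : ℝ), s ^ 2 * exp (-m * s) ∂ν ≤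
      ∫ s in Ioi (0 : ℝ), s ^ 2 * exp (-(L * m) * s) ∂ν) :
    2 / π ^ 2 * (k - exp (1 - L)) * lam ^ 2 * ∫ s in Ioi (0 : ℝ), s ^ 2 * exp (-m * s) ∂ν ≤
      (phiC a b ν (w + lam * Complex.I) - phiC a b ν w).re := by
  have h_fraction : (k - exp (1 - L)) * ∫ s in Ioi (0 : ℝ), s ^ 2 * exp (-m * s) ∂ν ≤
      ∫ s in Ioc 0 (1 / m), s ^ 2 * exp (-m * s) ∂ν := by
    linarith [integral_sq_mul_exp_le_truncated_add hν hm hL]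
  calc _ = 2 / π ^ 2 * lam ^ 2 *
          ((k - exp (1 - L)) * ∫ s in Ioi (0 : ℝ), s ^ 2 * exp (-m * s) ∂ν) := by ring
    _ ≤ 2 / π ^ 2 * lam ^ 2 * ∫ s in Ioc 0 (1 / m), s ^ 2 * exp (-m * s) ∂ν := by gcongr
    _ ≤ ∫ s in Ioi (0 : ℝ), exp (-w * s) * (1 - cos (lam * s)) ∂ν :=
        truncated_integral_sq_mul_exp_le hν hw hm hwm hlam
    _ = _ := (re_phiC_sub hν a b hw lam).symm

end LevyMeasure

theorem bernstein_real_part_lower_estimate_general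
    {φ : ℝ → ℝ} {a b : ℝ} {ν : Measure ℝ} {θ c x₀ : ℝ}
    (hνfin : ∫⁻ s in Ioi (0 : ℝ), ENNReal.ofReal (min 1 s) ∂ν ≠ ⊤)
    (hφ : ∀ x : ℝ, 0 < x → φ x = a + b * x + ∫ s in Ioi (0 : ℝ), (1 - exp (-x * s)) ∂ν)
    (hc : 0 < c) (hx₀ : 0 ≤ x₀) (hscal : WLSC (fun x ↦ -deriv (deriv φ) x) θ c x₀) :
    ∃ C : ℝ, 0 < C ∧ ∀ w : ℝ, x₀ < w → ∀ lam : ℝ,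
      C * lam ^ 2 * -deriv (deriv φ) (max |lam| w) ≤
        (phiC a b ν (w + lam * Complex.I) - phiC a b ν w).re := by
  have hν := integrableOn_min_one_of_lintegral_ne_top hνfin
  obtain ⟨L, hL, hLc⟩ := exists_exp_one_sub_lt_const_mul_rpow hc θ
  refine ⟨2 / π ^ 2 * (c * L ^ θ - exp (1 - L)),
    mul_pos (by positivity) (sub_pos.2 hLc), fun w hw lam ↦ ?_⟩
  have hw_pos : 0 < w := hx₀.trans_lt hw
  have hm : 0 < max |lam| w := lt_max_of_lt_right hw_pos
  have h_scaled := hscal L hL (max |lam| w) (lt_max_of_lt_right hw)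
  simp only [neg_deriv_deriv_bernstein hν hφ hm,
    neg_deriv_deriv_bernstein hν hφ (show 0 < L * max |lam| w by positivity)] at h_scaled ⊢
  exact mul_integral_sq_mul_exp_le_re_phiC_sub hν a b hw_pos.le hm (le_max_right _ _)
    (le_max_left _ _) hL h_scaled

/-- Lower estimate on the real part of the holomorphic extension:
`Re(φ(w+iλ) − φ(w)) ≥ C λ² (−φ''(max{|λ|, w}))` for `w > x₀`, `λ ∈ ℝ`. -/
theorem bernstein_real_part_lower_estimate
    (φ : ℝ → ℝ) (a b : ℝ) (ν : Measure ℝ) (α c x₀ : ℝ)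
    (ha : 0 ≤ a) (hb : 0 ≤ b)
    (hνfin : ∫⁻ s in Ioi (0:ℝ), ENNReal.ofReal (min 1 s) ∂ν ≠ ⊤)
    (hφ : ∀ x : ℝ, 0 < x →
      φ x = a + b * x + ∫ s in Ioi (0:ℝ), (1 - Real.exp (-x * s)) ∂ν)
    (hα : 0 < α) (hc : 0 < c) (hc1 : c ≤ 1) (hx₀ : 0 ≤ x₀)
    (hscal : WLSC (fun x => -(deriv (deriv φ) x)) (α - 2) c x₀) :
    ∃ C : ℝ, 0 < C ∧
      ∀ w : ℝ, x₀ < w → ∀ lam : ℝ,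
        C * lam ^ 2 * -(deriv (deriv φ) (max |lam| w)) ≤
          (phiC a b ν ((w : ℂ) + (lam : ℂ) * Complex.I) - phiC a b ν (w : ℂ)).re :=
  bernstein_real_part_lower_estimate_general hνfin hφ hc hx₀ hscal
end
end

section
/- Let φ be a Bernstein function and suppose −φ'' ∈ WLSC(α−2, c, x₀) for some c ∈ (0,1], x₀ ≥ 0 and α > 0. Then there exist a complete Bernstein function f and a constant C ≥ 1 such that C^{−1}·φ(x) ≤ f(x) ≤ C·φ(x) for all x > 0, and C^{−1}·(−φ''(x)) ≤ −f''(x) ≤ C·(−φ''(x)) for all x > x₀. -/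
open MeasureTheory Real Set

noncomputable section

/-- A function is completely monotone (on `(0,∞)`) if it is smooth there and
`(−1)^n f^{(n)} ≥ 0` for all `n`. -/
def IsCompletelyMonotone (f : ℝ → ℝ) : Prop :=
  ContDiffOn ℝ (⊤ : ℕ∞) f (Ioi 0) ∧
    ∀ (n : ℕ) (x : ℝ), 0 < x → 0 ≤ (-1 : ℝ) ^ n * iteratedDeriv n f x

/-- A Bernstein function: nonnegative, smooth on `(0,∞)`, with completely
monotone derivative. -/
def IsBernstein (φ : ℝ → ℝ) : Prop :=
  (∀ x : ℝ, 0 < x → 0 ≤ φ x) ∧ ContDiffOn ℝ (⊤ : ℕ∞) φ (Ioi 0) ∧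
    IsCompletelyMonotone (deriv φ)

/-- A complete Bernstein function: a Bernstein function whose representing measure
has a completely monotone density with respect to Lebesgue measure. -/
def IsCompleteBernstein (f : ℝ → ℝ) : Prop :=
  IsBernstein f ∧
    ∃ a b : ℝ, 0 ≤ a ∧ 0 ≤ b ∧
      ∃ m : ℝ → ℝ, IsCompletelyMonotone m ∧ (∀ x : ℝ, 0 < x → 0 ≤ m x) ∧
        (∫⁻ s in Ioi (0:ℝ), ENNReal.ofReal (min 1 s * m s) ≠ ⊤) ∧
        ∀ x : ℝ, 0 < x →
          f x = a + b * x + ∫ s in Ioi (0:ℝ), (1 - Real.exp (-x * s)) * m s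

/-!
Let `a = φ(0+)` and `b = φ'(∞)`. The candidate is `f(x) = a + b x + ∫ x / (x + t) σ(dt)` with
`σ(dt) = t² φ'''(t) dt`. The kernel `x / (x + t)` lies between `min(1, x / t) / 2` and
`min(1, x / t)`, and integration by parts gives `∫ min(1, x / t) σ(dt) = 2 (φ - a) - x φ' - b x`
at `x`, so `f ≈ φ` because `0 ≤ b x` and `0 ≤ x φ' ≤ φ - a`.

In `-f''(x) = ∫ 2 t / (x + t)³ σ(dt)` the range `t > x` is comparable to
`∫_x^∞ t⁻² σ(dt) = -φ''(x)`, whatever the behaviour of `φ`. The range `t ≤ x` contributes at most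
`2 x⁻³ ∫_0^x t³ φ'''(t) dt ≤ 6 x⁻³ ∫_0^x t² (-φ''(t)) dt`. Lower scaling with an exponent
`θ ∈ (-3, -2]` bounds `-φ''(t)` by a multiple of `(t / x) ^ θ (-φ''(x))`, which makes this
`O(-φ''(x))`. Below `x₀`, where the scaling says nothing, `-φ''(t) ≤ 4 φ(t) t⁻²` takes its place;
it is here that `θ ≤ -2` is used, together with the fact that the completely monotone function
`-φ''` is positive at `2 x₀` unless it vanishes identically.
-/

open Filter Topology

namespace IsCompletelyMonotone

theorem of_hasDerivAt {F : ℕ → ℝ → ℝ}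
    (hderiv : ∀ n x, 0 < x → HasDerivAt (F n) (-F (n + 1) x) x)
    (hnonneg : ∀ n x, 0 < x → 0 ≤ F n x) : IsCompletelyMonotone (F 0) := by
  have hiter (n : ℕ) : EqOn (iteratedDeriv n (F 0)) (fun x => (-1) ^ n * F n x) (Ioi 0) := by
    induction n with
    | zero => intro x _; simp
    | succ n ih =>
      intro x (hx : 0 < x)
      rw [iteratedDeriv_succ, (ih.eventuallyEq_of_mem (Ioi_mem_nhds hx)).deriv_eq,
        ((hderiv n x hx).const_mul _).deriv]
      ring
  refine ⟨contDiffOn_of_differentiableOn_deriv fun n _ => ?_, fun n x hx => ?_⟩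
  · refine DifferentiableOn.congr (f := fun x => (-1) ^ n * F n x) (fun x hx => ?_) fun x hx => ?_
    · exact ((hderiv n x hx).const_mul _).differentiableAt.differentiableWithinAt
    · rw [iteratedDerivWithin_of_isOpen isOpen_Ioi hx, hiter n hx]
  · simpa [hiter n hx, ← mul_assoc, ← mul_pow] using hnonneg n x hx

variable {g h : ℝ → ℝ}

theorem congr (hg : IsCompletelyMonotone g) (hgh : EqOn h g (Ioi 0)) : IsCompletelyMonotone h := by
  refine ⟨hg.1.congr hgh, fun n x hx => ?_⟩
  rw [(hgh.eventuallyEq_of_mem (Ioi_mem_nhds hx)).iteratedDeriv_eq n]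
  exact hg.2 n x hx

theorem nonneg (hg : IsCompletelyMonotone g) {x : ℝ} (hx : 0 < x) : 0 ≤ g x := by
  simpa using hg.2 0 x hx

theorem hasDerivAt (hg : IsCompletelyMonotone g) {x : ℝ} (hx : 0 < x) :
    HasDerivAt g (deriv g x) x :=
  ((hg.1.contDiffAt (Ioi_mem_nhds hx)).differentiableAt (by simp)).hasDerivAt

theorem neg_deriv (hg : IsCompletelyMonotone g) : IsCompletelyMonotone fun x => -deriv g x := by
  refine ⟨((contDiffOn_infty_iff_deriv_of_isOpen isOpen_Ioi).1 hg.1).2.neg, fun n x hx => ?_⟩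
  have := hg.2 (n + 1) x hx
  rw [iteratedDeriv_succ', pow_succ] at this
  rw [iteratedDeriv_fun_neg]
  linarith

theorem const_add (hg : IsCompletelyMonotone g) {b : ℝ} (hb : 0 ≤ b) :
    IsCompletelyMonotone fun x => b + g x := by
  refine ⟨contDiffOn_const.add hg.1, fun n x hx => ?_⟩
  obtain rfl | hn := n.eq_zero_or_pos
  · simpa using add_nonneg hb (hg.nonneg hx)
  · rw [iteratedDeriv_const_add hn]
    exact hg.2 n x hx

theorem neg_one_pow_mul_iteratedDeriv (hg : IsCompletelyMonotone g) (n : ℕ) :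
    IsCompletelyMonotone fun x => (-1) ^ n * iteratedDeriv n g x := by
  induction n with
  | zero => simpa using hg
  | succ n ih =>
    convert ih.neg_deriv using 2 with x
    rw [deriv_const_mul_field, iteratedDeriv_succ, pow_succ]
    ring

theorem antitoneOn (hg : IsCompletelyMonotone g) : AntitoneOn g (Ioi 0) := by
  refine antitoneOn_of_deriv_nonpos (convex_Ioi 0) hg.1.continuousOn ?_ fun x hx => ?_
  · rw [interior_Ioi]
    exact fun x hx => (hg.hasDerivAt hx).differentiableAt.differentiableWithinAt
  · rw [interior_Ioi] at hx
    exact neg_nonneg.1 (hg.neg_deriv.nonneg hx)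

/-! ### A completely monotone function with a zero vanishes identically -/

theorem exists_taylor (hg : IsCompletelyMonotone g) (n : ℕ) {x y : ℝ} (hx : 0 < x) (hxy : x < y) :
    ∃ ξ ∈ Ioo x y,
      g x = ∑ k ∈ Finset.range (n + 1),
          (y - x) ^ k / k.factorial * ((-1) ^ k * iteratedDeriv k g y) +
        (y - x) ^ (n + 1) / (n + 1).factorial *
          ((-1) ^ (n + 1) * iteratedDeriv (n + 1) g ξ) := by
  have hsub : uIcc y x ⊆ Ioi 0 := by
    rw [uIcc_of_ge hxy.le]; exact fun z hz => hx.trans_le hz.1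
  obtain ⟨ξ, hξ, h⟩ := taylor_mean_remainder_lagrange_iteratedDeriv (n := n) hxy.ne'
    ((hg.1.mono hsub).of_le (by exact_mod_cast le_top))
  refine ⟨ξ, uIoo_of_ge hxy.le ▸ hξ, ?_⟩
  have hsign (k : ℕ) : (x - y) ^ k = (-1) ^ k * (y - x) ^ k := by rw [← mul_pow]; congr 1; ring
  rw [taylor_within_apply, sub_eq_iff_eq_add'] at h
  rw [h]
  congr 1
  · refine Finset.sum_congr rfl fun k _ => ?_
    rw [iteratedDerivWithin_eq_iteratedDeriv (uniqueDiffOn_uIcc hxy.ne')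
      ((hg.1.contDiffAt (Ioi_mem_nhds (hx.trans hxy))).of_le (by exact_mod_cast le_top))
      left_mem_uIcc, hsign, smul_eq_mul]
    ring
  · rw [hsign]
    ring

theorem pow_div_factorial_mul_iteratedDeriv_le (hg : IsCompletelyMonotone g) (n : ℕ) {x y : ℝ}
    (hx : 0 < x) (hxy : x < y) :
    (y - x) ^ (n + 1) / (n + 1).factorial * ((-1) ^ (n + 1) * iteratedDeriv (n + 1) g y)
      ≤ g x := by
  obtain ⟨ξ, hξ, h⟩ := hg.exists_taylor n hx hxy
  have hw (k : ℕ) : 0 ≤ (y - x) ^ k / k.factorial :=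
    div_nonneg (pow_nonneg (sub_nonneg.2 hxy.le) k) k.factorial.cast_nonneg
  rw [h]
  exact le_add_of_nonneg_of_le
    (Finset.sum_nonneg fun k _ => mul_nonneg (hw k) (hg.2 k y (hx.trans hxy)))
    (mul_le_mul_of_nonneg_left
      ((hg.neg_one_pow_mul_iteratedDeriv (n + 1)).antitoneOn (hx.trans hξ.1) (hx.trans hxy)
        hξ.2.le) (hw _))

theorem le_pow_div_factorial_mul_iteratedDeriv (hg : IsCompletelyMonotone g) (n : ℕ) {x y : ℝ}
    (hx : 0 < x) (hxy : x < y) (hy : ∀ k, iteratedDeriv k g y = 0) :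
    g x ≤
      (y - x) ^ (n + 1) / (n + 1).factorial *
        ((-1) ^ (n + 1) * iteratedDeriv (n + 1) g x) := by
  obtain ⟨ξ, hξ, h⟩ := hg.exists_taylor n hx hxy
  simp only [hy, mul_zero, Finset.sum_const_zero, zero_add] at h
  rw [h]
  exact mul_le_mul_of_nonneg_left
    ((hg.neg_one_pow_mul_iteratedDeriv (n + 1)).antitoneOn hx (hx.trans hξ.1) hξ.1.le)
    (div_nonneg (pow_nonneg (sub_nonneg.2 hxy.le) _) (Nat.cast_nonneg _))

theorem iteratedDeriv_eq_zero_of_lt (hg : IsCompletelyMonotone g) {p q : ℝ} (hp : 0 < p)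
    (hgp : g p = 0) (hpq : p < q) (n : ℕ) : iteratedDeriv n g q = 0 := by
  have hzero : g =ᶠ[𝓝 q] fun _ => 0 := by
    filter_upwards [Ioi_mem_nhds hpq] with x hx
    exact le_antisymm (hgp ▸ hg.antitoneOn hp (hp.trans hx) (le_of_lt hx)) (hg.nonneg (hp.trans hx))
  rw [hzero.iteratedDeriv_eq n, iteratedDeriv_const]
  simp

/-- Taylor expansions at `q > p` and at `x` give
`g x ≤ ((q - x) / (x - z)) ^ (n + 1) * g z`, with ratio less than one once `z` is small enough. -/
theorem eq_zero_of_half_lt (hg : IsCompletelyMonotone g) {p x : ℝ} (hp : 0 < p) (hgp : g p = 0)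
    (hpx : p / 2 < x) (hxp : x < p) : g x = 0 := by
  have hx : 0 < x := by linarith
  set z := (2 * x - p) / 3 with hz
  set q := p + z
  have hz0 : 0 < z := by linarith
  have hxz : 0 < x - z := by linarith
  have hratio : (q - x) / (x - z) < 1 := (div_lt_one hxz).2 (by linarith)
  have hratio0 : 0 ≤ (q - x) / (x - z) := div_nonneg (by linarith) hxz.le
  have hbound (n : ℕ) : g x ≤ ((q - x) / (x - z)) ^ (n + 1) * g z := calc
    g x ≤ (q - x) ^ (n + 1) / (n + 1).factorial *
          ((-1) ^ (n + 1) * iteratedDeriv (n + 1) g x) :=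
      hg.le_pow_div_factorial_mul_iteratedDeriv n hx (by linarith)
        (hg.iteratedDeriv_eq_zero_of_lt hp hgp (by linarith))
    _ = ((q - x) / (x - z)) ^ (n + 1) * ((x - z) ^ (n + 1) / (n + 1).factorial *
          ((-1) ^ (n + 1) * iteratedDeriv (n + 1) g x)) := by
      rw [div_pow]
      field_simp
    _ ≤ ((q - x) / (x - z)) ^ (n + 1) * g z := by
      gcongr
      exact hg.pow_div_factorial_mul_iteratedDeriv_le n hz0 (by linarith)
  have hlim : Tendsto (fun n : ℕ => ((q - x) / (x - z)) ^ (n + 1) * g z) atTop (𝓝 0) := by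
    simpa using ((tendsto_add_atTop_iff_nat 1).2
      (tendsto_pow_atTop_nhds_zero_of_lt_one hratio0 hratio)).mul_const (g z)
  exact le_antisymm (ge_of_tendsto' hlim hbound) (hg.nonneg hx)

theorem eq_zero_of_eq_zero (hg : IsCompletelyMonotone g) {p x : ℝ} (hp : 0 < p) (hgp : g p = 0)
    (hx : 0 < x) : g x = 0 := by
  have hzero (k : ℕ) : g ((3 / 4) ^ k * p) = 0 := by
    induction k with
    | zero => simpa using hgp
    | succ k ih =>
      have : 0 < (3 / 4 : ℝ) ^ k * p := by positivity
      exact hg.eq_zero_of_half_lt this ih (by rw [pow_succ]; linarith) (by rw [pow_succ]; linarith)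
  obtain ⟨k, hk⟩ := exists_pow_lt_of_lt_one (div_pos hx hp) (show (3 / 4 : ℝ) < 1 by norm_num)
  have hkx : (3 / 4) ^ k * p ≤ x := ((lt_div_iff₀ hp).1 hk).le
  have hkpos : 0 < (3 / 4 : ℝ) ^ k * p := by positivity
  exact le_antisymm (hzero k ▸ hg.antitoneOn hkpos hx hkx) (hg.nonneg hx)

end IsCompletelyMonotone

/-! ### Differentiation under the integral sign -/

section Integral

variable {α : Type*} [MeasurableSpace α] {μ : Measure α} {K K' : ℝ → α → ℝ}

theorem aestronglyMeasurable_of_hasDerivAt {x : ℝ}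
    (hK : ∀ᶠ y in 𝓝 x, AEStronglyMeasurable (K y) μ)
    (hderiv : ∀ᵐ t ∂μ, HasDerivAt (fun y => K y t) (K' x t) x) :
    AEStronglyMeasurable (K' x) μ := by
  have hslope : ∀ᶠ y in 𝓝[≠] x, AEStronglyMeasurable (fun t => slope (fun y => K y t) x y) μ := by
    filter_upwards [hK.filter_mono nhdsWithin_le_nhds] with y hy
    exact (hy.sub hK.self_of_nhds).const_mul (y - x)⁻¹
  obtain ⟨u, hu, hmeas⟩ := exists_seq_forall_of_frequently hslope.frequently
  exact aestronglyMeasurable_of_tendsto_ae atTop hmeas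
    (hderiv.mono fun t ht => (hasDerivAt_iff_tendsto_slope.1 ht).comp hu)

theorem hasDerivAt_integral_of_antitoneOn_abs_deriv
    (hint : ∀ x, 0 < x → Integrable (K x) μ)
    (hderiv : ∀ᵐ t ∂μ, ∀ x, 0 < x → HasDerivAt (fun y => K y t) (K' x t) x)
    (hanti : ∀ᵐ t ∂μ, AntitoneOn (fun x => |K' x t|) (Ioi 0)) {x : ℝ} (hx : 0 < x) :
    Integrable (K' x) μ ∧ HasDerivAt (fun y => ∫ t, K y t ∂μ) (∫ t, K' x t ∂μ) x := by
  have hmeas : ∀ᶠ y in 𝓝 x, AEStronglyMeasurable (K y) μ := by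
    filter_upwards [Ioi_mem_nhds hx] with y hy using (hint y hy).aestronglyMeasurable
  refine hasDerivAt_integral_of_dominated_loc_of_deriv_le
    (bound := fun t => ‖K (x / 2) t - K (x / 4) t‖ / (x / 4))
    (Ioi_mem_nhds (half_lt_self hx)) hmeas (hint x hx)
    (aestronglyMeasurable_of_hasDerivAt hmeas (hderiv.mono fun t ht => ht x hx)) ?_
    (((hint _ (by linarith)).sub (hint _ (by linarith))).norm.div_const _)
    (hderiv.mono fun t ht y hy => ht y ((half_pos hx).trans hy))
  filter_upwards [hderiv, hanti] with t hdt hat y (hy : x / 2 < y)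
  obtain ⟨ξ, hξ, hslope⟩ := exists_hasDerivAt_eq_slope (fun y => K y t) (fun y => K' y t)
    (show x / 4 < x / 2 by linarith)
    (fun z hz => (hdt z (by linarith [hz.1])).continuousAt.continuousWithinAt)
    (fun z hz => hdt z (by linarith [hz.1]))
  calc ‖K' y t‖ ≤ ‖K' ξ t‖ :=
        hat (show 0 < ξ by linarith [hξ.1]) (show 0 < y by linarith) (by linarith [hξ.2])
    _ = ‖K (x / 2) t - K (x / 4) t‖ / (x / 4) := by
        rw [hslope, norm_div, show x / 2 - x / 4 = x / 4 by ring,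
          Real.norm_of_nonneg (show 0 ≤ x / 4 by linarith)]

theorem IsCompletelyMonotone.integral
    (hK : ∀ᵐ t ∂μ, IsCompletelyMonotone fun x => K x t) (hint : ∀ x, 0 < x → Integrable (K x) μ) :
    IsCompletelyMonotone fun x => ∫ t, K x t ∂μ := by
  set F : ℕ → ℝ → α → ℝ := fun n x t => (-1) ^ n * iteratedDeriv n (fun y => K y t) x with hF
  have hderiv (n : ℕ) : ∀ᵐ t ∂μ, ∀ x, 0 < x → HasDerivAt (fun y => F n y t) (-F (n + 1) x t) x := by
    filter_upwards [hK] with t ht x hx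
    convert (ht.neg_one_pow_mul_iteratedDeriv n).hasDerivAt hx using 1
    simp only [hF, deriv_const_mul_field, iteratedDeriv_succ, pow_succ]
    ring
  have hanti (n : ℕ) : ∀ᵐ t ∂μ, AntitoneOn (fun x => |-F (n + 1) x t|) (Ioi 0) := by
    filter_upwards [hK] with t ht
    exact (ht.neg_one_pow_mul_iteratedDeriv (n + 1)).antitoneOn.congr fun x hx => by
      rw [abs_neg, abs_of_nonneg (ht.2 (n + 1) x hx)]
  have hintF (n : ℕ) : ∀ x, 0 < x → Integrable (F n x) μ := by
    induction n with
    | zero => simpa [hF] using hint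
    | succ n ih =>
      intro x hx
      simpa using
        (hasDerivAt_integral_of_antitoneOn_abs_deriv ih (hderiv n) (hanti n) hx).1.neg
  have hcm := of_hasDerivAt (F := fun n x => ∫ t, F n x t ∂μ)
    (fun n x hx => by
      rw [← integral_neg]
      exact (hasDerivAt_integral_of_antitoneOn_abs_deriv (hintF n) (hderiv n) (hanti n) hx).2)
    (fun n x hx => integral_nonneg_of_ae (hK.mono fun t ht => ht.2 n x hx))
  simpa [hF] using hcm

end Integral

theorem IsBernstein.of_hasDerivAt {f g : ℝ → ℝ} (hf : ∀ x, 0 < x → 0 ≤ f x)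
    (hderiv : ∀ x, 0 < x → HasDerivAt f (g x) x) (hg : IsCompletelyMonotone g) :
    IsBernstein f := by
  have hcm : IsCompletelyMonotone (deriv f) := hg.congr fun x hx => (hderiv x hx).deriv
  exact ⟨hf, (contDiffOn_infty_iff_deriv_of_isOpen isOpen_Ioi).2
    ⟨fun x hx => (hderiv x hx).differentiableAt.differentiableWithinAt, hcm.1⟩, hcm⟩

/-! ### Complete Bernstein functions from Stieltjes measures -/

/-- The function `x ↦ a + b x + ∫ x / (x + t) σ(dt)`, the general form of a complete Bernstein
function in terms of its Stieltjes measure `σ` on `(0, ∞)`. -/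
def stieltjesBernstein (a b : ℝ) (σ : Measure ℝ) (x : ℝ) : ℝ :=
  a + b * x + ∫ t in Ioi 0, x / (x + t) ∂σ

/-- The Lévy density `s ↦ ∫ t exp (-t s) σ(dt)` of `stieltjesBernstein a b σ`. -/
def stieltjesDensity (σ : Measure ℝ) (s : ℝ) : ℝ :=
  ∫ t in Ioi 0, t * exp (-(t * s)) ∂σ

theorem hasDerivAt_div_self_add {x t : ℝ} (hxt : x + t ≠ 0) :
    HasDerivAt (fun y => y / (y + t)) (t / (x + t) ^ 2) x :=
  ((hasDerivAt_id x).div ((hasDerivAt_id x).add_const t) hxt).congr_deriv (by simp)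

theorem hasDerivAt_div_add_pow {x t : ℝ} (hxt : x + t ≠ 0) (n : ℕ) :
    HasDerivAt (fun y => t / (y + t) ^ n) (-(n * t / (x + t) ^ (n + 1))) x := by
  cases n with
  | zero => simpa using hasDerivAt_const x t
  | succ n =>
    refine ((hasDerivAt_const x t).div (((hasDerivAt_id x).add_const t).pow (n + 1))
      (pow_ne_zero _ hxt)).congr_deriv ?_
    simp only [id, Pi.pow_apply, Nat.add_sub_cancel]
    field_simp
    ring

theorem isCompletelyMonotone_div_add_sq {t : ℝ} (ht : 0 < t) :
    IsCompletelyMonotone fun x => t / (x + t) ^ 2 := by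
  have := IsCompletelyMonotone.of_hasDerivAt
    (F := fun n x => (n + 1).factorial * (t / (x + t) ^ (n + 2))) (fun n x hx => ?_)
    fun n x hx => by positivity
  · simpa using this
  · refine ((hasDerivAt_div_add_pow (by positivity) (n + 2)).const_mul _).congr_deriv ?_
    push_cast [Nat.factorial_succ (n + 1)]
    ring

theorem isCompletelyMonotone_mul_exp_neg {t : ℝ} (ht : 0 < t) :
    IsCompletelyMonotone fun s => t * exp (-(t * s)) := by
  have := IsCompletelyMonotone.of_hasDerivAt
    (F := fun n s => t ^ (n + 1) * exp (-(t * s))) (fun n s _ => ?_) fun n s _ => by positivity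
  · simpa using this
  · refine (((hasDerivAt_id s).const_mul t).fun_neg.exp.const_mul (t ^ (n + 1))).congr_deriv ?_
    simp only [id]
    ring

theorem mul_exp_neg_le {s t : ℝ} (hs : 0 < s) (ht : 0 < t) :
    t * exp (-(t * s)) ≤ 2 * s⁻¹ * (s⁻¹ / (s⁻¹ + t)) := by
  have hexp : 1 + t * s + (t * s) ^ 2 / 2 ≤ exp (t * s) :=
    quadratic_le_exp_of_nonneg (by positivity)
  have hrhs : 2 * s⁻¹ * (s⁻¹ / (s⁻¹ + t)) = 2 * s⁻¹ / (1 + t * s) := by field_simp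
  rw [exp_neg, ← div_eq_mul_inv, hrhs, div_le_div_iff₀ (exp_pos _) (by positivity)]
  calc t * (1 + t * s) = s⁻¹ * (t * s + (t * s) ^ 2) := by field_simp
    _ ≤ s⁻¹ * (2 * exp (t * s)) := by gcongr; linarith [mul_pos ht hs]
    _ = 2 * s⁻¹ * exp (t * s) := by ring

theorem min_one_le_two_mul_one_sub_exp_neg {s : ℝ} (hs : 0 ≤ s) : min 1 s ≤ 2 * (1 - exp (-s)) := by
  have hexp : exp (-s) * (1 + s) ≤ 1 := calc
    exp (-s) * (1 + s) ≤ exp (-s) * exp s := by gcongr; linarith [add_one_le_exp s]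
    _ = 1 := by rw [← exp_add]; simp
  rcases le_total 1 s with h | h
  · rw [min_eq_left h]; nlinarith [exp_pos (-s)]
  · rw [min_eq_right h]; nlinarith [exp_pos (-s)]

theorem integrableOn_one_sub_exp_mul {x t : ℝ} (hx : 0 < x) (ht : 0 < t) :
    IntegrableOn (fun s => (1 - exp (-x * s)) * (t * exp (-(t * s)))) (Ioi 0) ∧
      ∫ s in Ioi 0, (1 - exp (-x * s)) * (t * exp (-(t * s))) = x / (x + t) := by
  have hsplit : (fun s => (1 - exp (-x * s)) * (t * exp (-(t * s))))
      = fun s => t * exp (-t * s) - t * exp (-(x + t) * s) := by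
    ext s
    rw [show -(x + t) * s = -x * s + -(t * s) by ring, exp_add, neg_mul t s]
    ring
  have hint {r : ℝ} (hr : 0 < r) : IntegrableOn (fun s => t * exp (-r * s)) (Ioi 0) :=
    (integrableOn_exp_mul_Ioi (neg_lt_zero.2 hr) 0).const_mul t
  rw [hsplit]
  refine ⟨(hint ht).sub (hint (add_pos hx ht)), ?_⟩
  rw [integral_sub (hint ht) (hint (add_pos hx ht)), integral_const_mul, integral_const_mul,
    integral_exp_mul_Ioi (neg_lt_zero.2 ht), integral_exp_mul_Ioi (neg_lt_zero.2 (add_pos hx ht))]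
  simp only [mul_zero, exp_zero, neg_div_neg_eq]
  field_simp
  ring

section Stieltjes

variable {σ : Measure ℝ} {a b x : ℝ}

theorem integrableOn_div_self_add (hσ : IntegrableOn (fun t => (1 + t)⁻¹) (Ioi 0) σ) (hx : 0 < x) :
    IntegrableOn (fun t => x / (x + t)) (Ioi 0) σ := by
  refine (hσ.const_mul (1 + x)).mono' (Measurable.aestronglyMeasurable (by fun_prop)) ?_
  filter_upwards [ae_restrict_mem measurableSet_Ioi] with t (ht : 0 < t)
  rw [norm_of_nonneg (by positivity), ← div_eq_mul_inv, div_le_div_iff₀ (by positivity)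
    (by positivity)]
  nlinarith

theorem hasDerivAt_integral_div_self_add (hσ : IntegrableOn (fun t => (1 + t)⁻¹) (Ioi 0) σ)
    (hx : 0 < x) :
    IntegrableOn (fun t => t / (x + t) ^ 2) (Ioi 0) σ ∧
      HasDerivAt (fun y => ∫ t in Ioi 0, y / (y + t) ∂σ) (∫ t in Ioi 0, t / (x + t) ^ 2 ∂σ) x := by
  refine hasDerivAt_integral_of_antitoneOn_abs_deriv (K' := fun x t => t / (x + t) ^ 2)
    (fun x => integrableOn_div_self_add hσ) ?_ ?_ hx
  · filter_upwards [ae_restrict_mem measurableSet_Ioi] with t (ht : 0 < t) x hx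
    exact hasDerivAt_div_self_add (by positivity)
  · filter_upwards [ae_restrict_mem measurableSet_Ioi] with t (ht : 0 < t)
    exact (isCompletelyMonotone_div_add_sq ht).antitoneOn.congr fun x (hx : 0 < x) =>
      (abs_of_pos (by positivity)).symm

theorem hasDerivAt_integral_div_add_sq (hσ : IntegrableOn (fun t => (1 + t)⁻¹) (Ioi 0) σ)
    (hx : 0 < x) :
    IntegrableOn (fun t => 2 * t / (x + t) ^ 3) (Ioi 0) σ ∧
      HasDerivAt (fun y => ∫ t in Ioi 0, t / (y + t) ^ 2 ∂σ)
        (-∫ t in Ioi 0, 2 * t / (x + t) ^ 3 ∂σ) x := by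
  have key := hasDerivAt_integral_of_antitoneOn_abs_deriv
    (K' := fun x t => -(2 * t / (x + t) ^ 3))
    (fun x hx => (hasDerivAt_integral_div_self_add hσ hx).1) ?_ ?_ hx
  · rw [integral_neg] at key
    exact ⟨key.1.neg.congr (.of_forall fun t => neg_neg _), key.2⟩
  · filter_upwards [ae_restrict_mem measurableSet_Ioi] with t (ht : 0 < t) x hx
    exact_mod_cast hasDerivAt_div_add_pow (by positivity) 2
  · filter_upwards [ae_restrict_mem measurableSet_Ioi] with t (ht : 0 < t) x (hx : 0 < x) y
      (hy : 0 < y) hxy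
    simp only [abs_neg]
    rw [abs_of_pos (by positivity), abs_of_pos (by positivity)]
    gcongr

theorem hasDerivAt_stieltjesBernstein (hσ : IntegrableOn (fun t => (1 + t)⁻¹) (Ioi 0) σ)
    (hx : 0 < x) :
    HasDerivAt (stieltjesBernstein a b σ) (b + ∫ t in Ioi 0, t / (x + t) ^ 2 ∂σ) x :=
  ((((hasDerivAt_id x).const_mul b).const_add a).add
    (hasDerivAt_integral_div_self_add hσ hx).2).congr_deriv (by simp)

theorem neg_deriv_deriv_stieltjesBernstein
    (hσ : IntegrableOn (fun t => (1 + t)⁻¹) (Ioi 0) σ) (hx : 0 < x) :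
    -deriv (deriv (stieltjesBernstein a b σ)) x = ∫ t in Ioi 0, 2 * t / (x + t) ^ 3 ∂σ := by
  have hderiv : deriv (stieltjesBernstein a b σ) =ᶠ[𝓝 x]
      fun y => b + ∫ t in Ioi 0, t / (y + t) ^ 2 ∂σ := by
    filter_upwards [Ioi_mem_nhds hx] with y hy using (hasDerivAt_stieltjesBernstein hσ hy).deriv
  rw [hderiv.deriv_eq, ((hasDerivAt_integral_div_add_sq hσ hx).2.const_add b).deriv, neg_neg]

theorem isBernstein_stieltjesBernstein (hσ : IntegrableOn (fun t => (1 + t)⁻¹) (Ioi 0) σ)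
    (ha : 0 ≤ a) (hb : 0 ≤ b) : IsBernstein (stieltjesBernstein a b σ) := by
  refine .of_hasDerivAt (fun x hx => ?_) (fun x hx => hasDerivAt_stieltjesBernstein hσ hx) ?_
  · have : 0 ≤ ∫ t in Ioi 0, x / (x + t) ∂σ :=
      setIntegral_nonneg measurableSet_Ioi fun t (ht : 0 < t) => by positivity
    unfold stieltjesBernstein
    positivity
  · refine IsCompletelyMonotone.const_add (.integral ?_ fun x hx =>
      (hasDerivAt_integral_div_self_add hσ hx).1) hb
    filter_upwards [ae_restrict_mem measurableSet_Ioi] with t ht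
      using isCompletelyMonotone_div_add_sq ht

theorem isCompletelyMonotone_stieltjesDensity
    (hσ : IntegrableOn (fun t => (1 + t)⁻¹) (Ioi 0) σ) :
    IsCompletelyMonotone (stieltjesDensity σ) := by
  refine .integral ?_ fun s hs => ?_
  · filter_upwards [ae_restrict_mem measurableSet_Ioi] with t ht
      using isCompletelyMonotone_mul_exp_neg ht
  · refine ((integrableOn_div_self_add hσ (inv_pos.2 hs)).const_mul (2 * s⁻¹)).mono'
      (by fun_prop) ?_
    filter_upwards [ae_restrict_mem measurableSet_Ioi] with t (ht : 0 < t)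
    rw [norm_of_nonneg (by positivity)]
    exact mul_exp_neg_le hs ht

variable [SFinite σ]

theorem integrable_prod_one_sub_exp_mul (hσ : IntegrableOn (fun t => (1 + t)⁻¹) (Ioi 0) σ)
    (hx : 0 < x) :
    Integrable (Function.uncurry fun s t => (1 - exp (-x * s)) * (t * exp (-(t * s))))
      ((volume.restrict (Ioi 0)).prod (σ.restrict (Ioi 0))) := by
  rw [integrable_prod_iff' (Continuous.aestronglyMeasurable (by fun_prop))]
  constructor
  · filter_upwards [ae_restrict_mem measurableSet_Ioi] with t ht
      using (integrableOn_one_sub_exp_mul hx ht).1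
  · refine (integrableOn_div_self_add hσ hx).congr ?_
    filter_upwards [ae_restrict_mem measurableSet_Ioi] with t (ht : 0 < t)
    rw [← (integrableOn_one_sub_exp_mul hx ht).2]
    refine setIntegral_congr_fun measurableSet_Ioi fun s (hs : 0 < s) => (norm_of_nonneg ?_).symm
    have : exp (-x * s) ≤ 1 := exp_le_one_iff.2 (by nlinarith)
    exact mul_nonneg (sub_nonneg.2 this) (by positivity)

theorem integrableOn_one_sub_exp_mul_stieltjesDensity
    (hσ : IntegrableOn (fun t => (1 + t)⁻¹) (Ioi 0) σ) (hx : 0 < x) :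
    IntegrableOn (fun s => (1 - exp (-x * s)) * stieltjesDensity σ s) (Ioi 0) := by
  simpa only [IntegrableOn, Function.uncurry_apply_pair, integral_const_mul, stieltjesDensity] using
    (integrable_prod_one_sub_exp_mul hσ hx).integral_prod_left

theorem integral_one_sub_exp_mul_stieltjesDensity
    (hσ : IntegrableOn (fun t => (1 + t)⁻¹) (Ioi 0) σ) (hx : 0 < x) :
    ∫ s in Ioi 0, (1 - exp (-x * s)) * stieltjesDensity σ s = ∫ t in Ioi 0, x / (x + t) ∂σ := calc
  _ = ∫ s in Ioi 0, ∫ t in Ioi 0, (1 - exp (-x * s)) * (t * exp (-(t * s))) ∂σ := by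
    simp only [stieltjesDensity, integral_const_mul]
  _ = ∫ t in Ioi 0, (∫ s in Ioi 0, (1 - exp (-x * s)) * (t * exp (-(t * s)))) ∂σ :=
    integral_integral_swap (integrable_prod_one_sub_exp_mul hσ hx)
  _ = _ := setIntegral_congr_fun measurableSet_Ioi fun t ht =>
    (integrableOn_one_sub_exp_mul hx ht).2

theorem isCompleteBernstein_stieltjesBernstein
    (hσ : IntegrableOn (fun t => (1 + t)⁻¹) (Ioi 0) σ) (ha : 0 ≤ a) (hb : 0 ≤ b) :
    IsCompleteBernstein (stieltjesBernstein a b σ) := by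
  have hm := isCompletelyMonotone_stieltjesDensity hσ
  refine ⟨isBernstein_stieltjesBernstein hσ ha hb, a, b, ha, hb, stieltjesDensity σ, hm,
    fun s => hm.nonneg, ?_, fun x hx => ?_⟩
  · have hint := (integrableOn_one_sub_exp_mul_stieltjesDensity hσ one_pos).const_mul 2
    refine ne_top_of_le_ne_top hint.lintegral_lt_top.ne
      (setLIntegral_mono' measurableSet_Ioi fun s (hs : 0 < s) => ENNReal.ofReal_le_ofReal ?_)
    rw [neg_one_mul, ← mul_assoc]
    exact mul_le_mul_of_nonneg_right (min_one_le_two_mul_one_sub_exp_neg hs.le) (hm.nonneg hs)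
  · rw [integral_one_sub_exp_mul_stieltjesDensity hσ hx, stieltjesBernstein]

end Stieltjes

/-! ### Integral identities for completely monotone and Bernstein functions -/

theorem integrableOn_Ioc_deriv_of_nonneg_of_tendsto {F F' : ℝ → ℝ} {p q l : ℝ} (hpq : p < q)
    (hderiv : ∀ t ∈ Ioc p q, HasDerivAt F (F' t) t) (hnonneg : ∀ t ∈ Ioo p q, 0 ≤ F' t)
    (hl : Tendsto F (𝓝[>] p) (𝓝 l)) :
    IntegrableOn F' (Ioc p q) ∧ ∫ t in Ioc p q, F' t = F q - l := by
  set G := Function.update F p l with hG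
  have hGF {t : ℝ} (ht : p < t) : G =ᶠ[𝓝 t] F := by
    filter_upwards [Ioi_mem_nhds ht] with s hs using Function.update_of_ne (ne_of_gt hs) _ _
  have hderivG : ∀ t ∈ Ioc p q, HasDerivAt G (F' t) t := fun t ht =>
    (hderiv t ht).congr_of_eventuallyEq (hGF ht.1)
  have hcont : ContinuousOn G (Icc p q) := by
    intro t ht
    obtain rfl | hpt := ht.1.eq_or_lt
    · refine ContinuousWithinAt.mono (t := Ici p) ?_ Icc_subset_Ici_self
      rw [← continuousWithinAt_Ioi_iff_Ici, hG, continuousWithinAt_update_same]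
      simpa using hl
    · exact (hderivG t ⟨hpt, ht.2⟩).continuousAt.continuousWithinAt
  have hderivG' : ∀ t ∈ Ioo p q, HasDerivAt G (F' t) t := fun t ht => hderivG t ⟨ht.1, ht.2.le⟩
  have hint := intervalIntegral.integrableOn_deriv_of_nonneg hcont hderivG' hnonneg
  refine ⟨hint, ?_⟩
  rw [← intervalIntegral.integral_of_le hpq.le,
    intervalIntegral.integral_eq_sub_of_hasDerivAt_of_le hpq.le hcont hderivG'
      ((intervalIntegrable_iff_integrableOn_Ioc_of_le hpq.le).2 hint),
    (hGF hpq).self_of_nhds, hG, Function.update_self]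

namespace IsCompletelyMonotone

variable {g : ℝ → ℝ} {b x : ℝ}

theorem hasDerivAt_deriv (hg : IsCompletelyMonotone g) (hx : 0 < x) :
    HasDerivAt (deriv g) (deriv (deriv g) x) x := by
  simpa only [deriv.fun_neg, neg_neg] using (hg.neg_deriv.hasDerivAt hx).fun_neg

theorem deriv_deriv_nonneg (hg : IsCompletelyMonotone g) (hx : 0 < x) : 0 ≤ deriv (deriv g) x := by
  simpa using hg.neg_deriv.neg_deriv.nonneg hx

theorem sub_mul_neg_deriv_le (hg : IsCompletelyMonotone g) {y : ℝ} (hx : 0 < x) (hxy : x < y) :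
    (y - x) * -deriv g y ≤ g x - g y := by
  obtain ⟨ξ, hξ, h⟩ := hg.exists_taylor 0 hx hxy
  have : (y - x) * -deriv g y ≤ (y - x) * -deriv g ξ :=
    mul_le_mul_of_nonneg_left
      (hg.neg_deriv.antitoneOn (hx.trans hξ.1) (hx.trans hxy) hξ.2.le) (sub_nonneg.2 hxy.le)
  simp at h
  linarith

theorem exists_tendsto_atTop (hg : IsCompletelyMonotone g) : ∃ b, Tendsto g atTop (𝓝 b) := by
  have hpos (x : ℝ) : 0 < max x 1 := lt_max_of_lt_right one_pos
  have hanti : Antitone fun x => g (max x 1) := fun x y hxy =>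
    hg.antitoneOn (hpos x) (hpos y) (max_le_max_right 1 hxy)
  have hbdd : BddBelow (range fun x => g (max x 1)) :=
    ⟨0, forall_mem_range.2 fun x => hg.nonneg (hpos x)⟩
  refine ⟨_, (tendsto_atTop_ciInf hanti hbdd).congr' ?_⟩
  filter_upwards [eventually_ge_atTop 1] with x hx
  rw [max_eq_left hx]

theorem limit_nonneg (hg : IsCompletelyMonotone g) (hb : Tendsto g atTop (𝓝 b)) : 0 ≤ b :=
  ge_of_tendsto hb ((eventually_gt_atTop 0).mono fun _ => hg.nonneg)

theorem tendsto_mul_neg_deriv_atTop (hg : IsCompletelyMonotone g) (hb : Tendsto g atTop (𝓝 b)) :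
    Tendsto (fun t => t * -deriv g t) atTop (𝓝 0) := by
  have hdiff : Tendsto (fun t => 2 * (g (t / 2) - g t)) atTop (𝓝 0) := by
    simpa using ((hb.comp (tendsto_id.atTop_div_const two_pos)).sub hb).const_mul 2
  refine squeeze_zero' ?_ ?_ hdiff
  · filter_upwards [eventually_gt_atTop 0] with t ht using mul_nonneg ht.le (hg.neg_deriv.nonneg ht)
  · filter_upwards [eventually_gt_atTop 0] with t ht
    linarith [hg.sub_mul_neg_deriv_le (half_pos ht) (half_lt_self ht)]

theorem tendsto_neg_deriv_atTop (hg : IsCompletelyMonotone g) (hb : Tendsto g atTop (𝓝 b)) :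
    Tendsto (fun t => -deriv g t) atTop (𝓝 0) := by
  have := (hg.tendsto_mul_neg_deriv_atTop hb).mul tendsto_inv_atTop_zero
  rw [mul_zero] at this
  refine this.congr' ?_
  filter_upwards [eventually_gt_atTop 0] with t ht
  field_simp

theorem integral_Ioi_mul_deriv_deriv (hg : IsCompletelyMonotone g) (hb : Tendsto g atTop (𝓝 b))
    (hx : 0 < x) :
    IntegrableOn (fun t => t * deriv (deriv g) t) (Ioi x) ∧
      ∫ t in Ioi x, t * deriv (deriv g) t = x * -deriv g x + g x - b := by
  have hderiv : ∀ t ∈ Ici x, HasDerivAt (fun t => -(t * -deriv g t) - g t)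
      (t * deriv (deriv g) t) t := fun t ht =>
    have ht : 0 < t := hx.trans_le ht
    ((((hasDerivAt_id t).mul (hg.hasDerivAt_deriv ht).fun_neg).neg).sub
      (hg.hasDerivAt ht)).congr_deriv (by simp)
  have hnonneg : ∀ t ∈ Ioi x, 0 ≤ t * deriv (deriv g) t := fun t ht =>
    mul_nonneg (hx.trans ht).le (hg.deriv_deriv_nonneg (hx.trans ht))
  have hlim := (hg.tendsto_mul_neg_deriv_atTop hb).neg.sub hb
  refine ⟨integrableOn_Ioi_deriv_of_nonneg' hderiv hnonneg hlim, ?_⟩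
  rw [integral_Ioi_of_hasDerivAt_of_nonneg' hderiv hnonneg hlim]
  ring

theorem integral_Ioi_deriv_deriv (hg : IsCompletelyMonotone g) (hb : Tendsto g atTop (𝓝 b))
    (hx : 0 < x) :
    IntegrableOn (deriv (deriv g)) (Ioi x) ∧ ∫ t in Ioi x, deriv (deriv g) t = -deriv g x := by
  have hderiv : ∀ t ∈ Ici x, HasDerivAt (deriv g) (deriv (deriv g) t) t :=
    fun t ht => hg.hasDerivAt_deriv (hx.trans_le ht)
  have hnonneg : ∀ t ∈ Ioi x, 0 ≤ deriv (deriv g) t := fun t ht =>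
    hg.deriv_deriv_nonneg (hx.trans ht)
  have hlim : Tendsto (deriv g) atTop (𝓝 0) := by simpa using (hg.tendsto_neg_deriv_atTop hb).neg
  refine ⟨integrableOn_Ioi_deriv_of_nonneg' hderiv hnonneg hlim, ?_⟩
  rw [integral_Ioi_of_hasDerivAt_of_nonneg' hderiv hnonneg hlim, zero_sub]

end IsCompletelyMonotone

namespace IsBernstein

variable {φ : ℝ → ℝ} {a x : ℝ}

theorem hasDerivAt (hφ : IsBernstein φ) (hx : 0 < x) : HasDerivAt φ (deriv φ x) x :=
  ((hφ.2.1.contDiffAt (Ioi_mem_nhds hx)).differentiableAt (by simp)).hasDerivAt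

theorem monotoneOn (hφ : IsBernstein φ) : MonotoneOn φ (Ioi 0) := by
  refine monotoneOn_of_deriv_nonneg (convex_Ioi 0) hφ.2.1.continuousOn ?_ fun x hx => ?_
  · rw [interior_Ioi]
    exact fun x hx => (hφ.hasDerivAt hx).differentiableAt.differentiableWithinAt
  · rw [interior_Ioi] at hx
    exact hφ.2.2.nonneg hx

theorem concaveOn (hφ : IsBernstein φ) : ConcaveOn ℝ (Ioi 0) φ := by
  refine AntitoneOn.concaveOn_of_deriv (convex_Ioi 0) hφ.2.1.continuousOn ?_ ?_
  · rw [interior_Ioi]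
    exact fun x hx => (hφ.hasDerivAt hx).differentiableAt.differentiableWithinAt
  · rw [interior_Ioi]
    exact hφ.2.2.antitoneOn

theorem exists_tendsto_nhdsGT_zero (hφ : IsBernstein φ) : ∃ a, Tendsto φ (𝓝[>] 0) (𝓝 a) :=
  ⟨_, hφ.monotoneOn.tendsto_nhdsGT ⟨0, forall_mem_image.2 hφ.1⟩⟩

theorem limit_nonneg (hφ : IsBernstein φ) (ha : Tendsto φ (𝓝[>] 0) (𝓝 a)) : 0 ≤ a :=
  ge_of_tendsto ha (eventually_mem_nhdsWithin.mono hφ.1)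

theorem mul_deriv_le (hφ : IsBernstein φ) (ha : Tendsto φ (𝓝[>] 0) (𝓝 a)) (hx : 0 < x) :
    x * deriv φ x ≤ φ x - a := by
  have hlim : Tendsto (fun y => (x - y) * deriv φ x) (𝓝[>] 0) (𝓝 (x * deriv φ x)) := by
    refine tendsto_nhdsWithin_of_tendsto_nhds (Continuous.tendsto' (by fun_prop) _ _ (by simp))
  refine le_of_tendsto_of_tendsto hlim (ha.const_sub (φ x)) ?_
  filter_upwards [Ioo_mem_nhdsGT hx] with y hy
  have := hφ.concaveOn.deriv_le_slope hy.1 hx hy.2 (hφ.hasDerivAt hx).differentiableAt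
  rwa [slope_def_field, le_div_iff₀ (sub_pos.2 hy.2), mul_comm] at this

theorem sq_mul_neg_deriv_deriv_le (hφ : IsBernstein φ) (ha : Tendsto φ (𝓝[>] 0) (𝓝 a))
    (hx : 0 < x) : x ^ 2 * -deriv (deriv φ) x ≤ 4 * (φ x - a) := by
  have hhalf : x / 2 < x := half_lt_self hx
  have h1 := hφ.2.2.sub_mul_neg_deriv_le (half_pos hx) hhalf
  have h2 := hφ.2.2.nonneg hx
  have h3 := hφ.mul_deriv_le ha (half_pos hx)
  have h4 := hφ.monotoneOn (half_pos hx) hx hhalf.le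
  nlinarith

theorem tendsto_mul_deriv_nhdsGT_zero (hφ : IsBernstein φ) (ha : Tendsto φ (𝓝[>] 0) (𝓝 a)) :
    Tendsto (fun t => t * deriv φ t) (𝓝[>] 0) (𝓝 0) :=
  squeeze_zero'
    (eventually_mem_nhdsWithin.mono fun _ ht => mul_nonneg (le_of_lt ht) (hφ.2.2.nonneg ht))
    (eventually_mem_nhdsWithin.mono fun _ ht => hφ.mul_deriv_le ha ht)
    (by simpa using ha.sub_const a)

theorem tendsto_sq_mul_neg_deriv_deriv_nhdsGT_zero (hφ : IsBernstein φ)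
    (ha : Tendsto φ (𝓝[>] 0) (𝓝 a)) :
    Tendsto (fun t => t ^ 2 * -deriv (deriv φ) t) (𝓝[>] 0) (𝓝 0) :=
  squeeze_zero'
    (eventually_mem_nhdsWithin.mono fun t ht =>
      mul_nonneg (sq_nonneg t) (hφ.2.2.neg_deriv.nonneg ht))
    (eventually_mem_nhdsWithin.mono fun _ ht => hφ.sq_mul_neg_deriv_deriv_le ha ht)
    (by simpa using (ha.sub_const a).const_mul 4)

theorem integral_Ioc_sq_mul_deriv_deriv_deriv (hφ : IsBernstein φ)
    (ha : Tendsto φ (𝓝[>] 0) (𝓝 a)) (hx : 0 < x) :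
    IntegrableOn (fun t => t ^ 2 * deriv (deriv (deriv φ)) t) (Ioc 0 x) ∧
      ∫ t in Ioc 0 x, t ^ 2 * deriv (deriv (deriv φ)) t =
        2 * (φ x - a) - 2 * (x * deriv φ x) - x ^ 2 * -deriv (deriv φ) x := by
  have key := integrableOn_Ioc_deriv_of_nonneg_of_tendsto
    (F := fun t => 2 * (φ t - a) - 2 * (t * deriv φ t) - t ^ 2 * -deriv (deriv φ) t)
    (F' := fun t => t ^ 2 * deriv (deriv (deriv φ)) t) (l := 0) hx (fun t ht => ?_)
    (fun t ht => mul_nonneg (sq_nonneg t) (hφ.2.2.deriv_deriv_nonneg ht.1)) ?_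
  · simpa only [sub_zero] using key
  · refine (((((hφ.hasDerivAt ht.1).sub_const a).const_mul 2).sub
      (((hasDerivAt_id t).mul (hφ.2.2.hasDerivAt ht.1)).const_mul 2)).sub
      (((hasDerivAt_id t).pow 2).mul (hφ.2.2.hasDerivAt_deriv ht.1).fun_neg)).congr_deriv ?_
    simp only [one_mul, id_eq, Nat.cast_ofNat, Nat.add_one_sub_one, pow_one, mul_one, mul_neg,
      Pi.pow_apply]
    ring
  · simpa using (((ha.sub_const a).const_mul 2).sub
      ((hφ.tendsto_mul_deriv_nhdsGT_zero ha).const_mul 2)).sub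
      (hφ.tendsto_sq_mul_neg_deriv_deriv_nhdsGT_zero ha)

end IsBernstein

/-! ### The Stieltjes measure attached to a Bernstein function -/

/-- The measure `t² φ'''(t) dt`, the Stieltjes measure of a complete Bernstein function
comparable to the Bernstein function `φ`. -/
def stieltjesMeasure (φ : ℝ → ℝ) : Measure ℝ :=
  volume.withDensity fun t => ENNReal.ofReal (t ^ 2 * deriv (deriv (deriv φ)) t)

instance (φ : ℝ → ℝ) : SFinite (stieltjesMeasure φ) := by
  unfold stieltjesMeasure
  infer_instance

namespace IsBernstein

variable {φ k : ℝ → ℝ} {a b x : ℝ} {s : Set ℝ}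

theorem integrableOn_stieltjesMeasure_iff (hφ : IsBernstein φ) (hs : MeasurableSet s)
    (hs₀ : s ⊆ Ioi 0) :
    IntegrableOn k s (stieltjesMeasure φ) ↔
      IntegrableOn (fun t => k t * (t ^ 2 * deriv (deriv (deriv φ)) t)) s := by
  have := measurable_deriv (deriv (deriv φ))
  rw [IntegrableOn, stieltjesMeasure, restrict_withDensity hs,
    integrable_withDensity_iff (by fun_prop) (.of_forall fun _ => ENNReal.ofReal_lt_top)]
  refine integrableOn_congr_fun (fun t ht => ?_) hs
  have := hφ.2.2.deriv_deriv_nonneg (hs₀ ht)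
  rw [ENNReal.toReal_ofReal (by positivity)]

theorem setIntegral_stieltjesMeasure (hφ : IsBernstein φ) (hs : MeasurableSet s)
    (hs₀ : s ⊆ Ioi 0) :
    ∫ t in s, k t ∂stieltjesMeasure φ = ∫ t in s, k t * (t ^ 2 * deriv (deriv (deriv φ)) t) := by
  have := measurable_deriv (deriv (deriv φ))
  rw [stieltjesMeasure, restrict_withDensity hs, integral_withDensity_eq_integral_toReal_smul
    (by fun_prop) (.of_forall fun _ => ENNReal.ofReal_lt_top)]
  refine setIntegral_congr_fun hs fun t ht => ?_
  have := hφ.2.2.deriv_deriv_nonneg (hs₀ ht)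
  rw [ENNReal.toReal_ofReal (by positivity), smul_eq_mul, mul_comm]

theorem integral_min_one_div_stieltjesMeasure (hφ : IsBernstein φ)
    (ha : Tendsto φ (𝓝[>] 0) (𝓝 a)) (hb : Tendsto (deriv φ) atTop (𝓝 b)) (hx : 0 < x) :
    IntegrableOn (fun t => min 1 (x / t)) (Ioi 0) (stieltjesMeasure φ) ∧
      ∫ t in Ioi 0, min 1 (x / t) ∂stieltjesMeasure φ
        = 2 * (φ x - a) - x * deriv φ x - b * x := by
  obtain ⟨hnear_int, hnear⟩ := hφ.integral_Ioc_sq_mul_deriv_deriv_deriv ha hx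
  obtain ⟨hfar_int, hfar⟩ := hφ.2.2.integral_Ioi_mul_deriv_deriv hb hx
  have hnear_eq : EqOn (fun t => min 1 (x / t) * (t ^ 2 * deriv (deriv (deriv φ)) t))
      (fun t => t ^ 2 * deriv (deriv (deriv φ)) t) (Ioc 0 x) := fun t ht => by
    simp only [min_eq_left ((one_le_div ht.1).2 ht.2), one_mul]
  have hfar_eq : EqOn (fun t => min 1 (x / t) * (t ^ 2 * deriv (deriv (deriv φ)) t))
      (fun t => x * (t * deriv (deriv (deriv φ)) t)) (Ioi x) := fun t (ht : x < t) => by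
    have ht₀ : 0 < t := hx.trans ht
    simp only [min_eq_right ((div_le_one ht₀).2 ht.le)]
    field_simp
  have hnear_int' := hnear_int.congr_fun hnear_eq.symm measurableSet_Ioc
  have hfar_int' := IntegrableOn.congr_fun (hfar_int.const_mul x) hfar_eq.symm measurableSet_Ioi
  rw [hφ.integrableOn_stieltjesMeasure_iff measurableSet_Ioi subset_rfl,
    hφ.setIntegral_stieltjesMeasure measurableSet_Ioi subset_rfl, ← Ioc_union_Ioi_eq_Ioi hx.le,
    setIntegral_union (Ioc_disjoint_Ioi le_rfl) measurableSet_Ioi hnear_int' hfar_int',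
    setIntegral_congr_fun measurableSet_Ioc hnear_eq,
    setIntegral_congr_fun measurableSet_Ioi hfar_eq, integral_const_mul, hnear, hfar]
  exact ⟨hnear_int'.union hfar_int', by ring⟩

theorem integral_Ioi_inv_sq_stieltjesMeasure (hφ : IsBernstein φ) (hx : 0 < x) :
    IntegrableOn (fun t => (t ^ 2)⁻¹) (Ioi x) (stieltjesMeasure φ) ∧
      ∫ t in Ioi x, (t ^ 2)⁻¹ ∂stieltjesMeasure φ = -deriv (deriv φ) x := by
  have hsub : Ioi x ⊆ Ioi 0 := Ioi_subset_Ioi hx.le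
  have heq : EqOn (fun t => (t ^ 2)⁻¹ * (t ^ 2 * deriv (deriv (deriv φ)) t))
      (deriv (deriv (deriv φ))) (Ioi x) := fun t ht =>
    inv_mul_cancel_left₀ (pow_ne_zero 2 (hsub ht).ne') _
  obtain ⟨b, hb⟩ := hφ.2.2.exists_tendsto_atTop
  obtain ⟨hint, h⟩ := hφ.2.2.integral_Ioi_deriv_deriv hb hx
  rw [hφ.integrableOn_stieltjesMeasure_iff measurableSet_Ioi hsub,
    hφ.setIntegral_stieltjesMeasure measurableSet_Ioi hsub,
    setIntegral_congr_fun measurableSet_Ioi heq]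
  exact ⟨hint.congr_fun heq.symm measurableSet_Ioi, h⟩

theorem integrableOn_inv_one_add_stieltjesMeasure (hφ : IsBernstein φ) :
    IntegrableOn (fun t => (1 + t)⁻¹) (Ioi 0) (stieltjesMeasure φ) := by
  obtain ⟨a, ha⟩ := hφ.exists_tendsto_nhdsGT_zero
  obtain ⟨b, hb⟩ := hφ.2.2.exists_tendsto_atTop
  refine (hφ.integral_min_one_div_stieltjesMeasure ha hb one_pos).1.mono'
    (Measurable.aestronglyMeasurable (by fun_prop)) ?_
  filter_upwards [ae_restrict_mem measurableSet_Ioi] with t (ht : 0 < t)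
  rw [norm_of_nonneg (by positivity), ← one_div]
  exact le_min ((div_le_one (by positivity)).2 (by linarith)) (by gcongr; linarith)

theorem integrableOn_Ioc_id_stieltjesMeasure (hφ : IsBernstein φ) (hx : 0 < x) :
    IntegrableOn (fun t => t) (Ioc 0 x) (stieltjesMeasure φ) := by
  obtain ⟨a, ha⟩ := hφ.exists_tendsto_nhdsGT_zero
  obtain ⟨b, hb⟩ := hφ.2.2.exists_tendsto_atTop
  have hint := (hφ.integral_min_one_div_stieltjesMeasure ha hb hx).1.const_mul x
  refine (IntegrableOn.mono_set hint Ioc_subset_Ioi_self).mono' (by fun_prop) ?_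
  filter_upwards [ae_restrict_mem measurableSet_Ioc] with t ht
  rw [norm_of_nonneg ht.1.le, min_eq_left ((one_le_div ht.1).2 ht.2), mul_one]
  exact ht.2

theorem hasDerivAt_rpow_sub_mul_sq_mul (hφ : IsBernstein φ) {θ : ℝ} (M : ℝ) (hθ : -3 < θ)
    (hx : 0 < x) :
    HasDerivAt (fun t => 3 * M / (θ + 3) * t ^ (θ + 3) - t * (t ^ 2 * -deriv (deriv φ) t))
      (3 * x ^ 2 * (M * x ^ θ - -deriv (deriv φ) x) + x * (x ^ 2 * deriv (deriv (deriv φ)) x))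
      x := by
  have hθ' : θ + 3 ≠ 0 := by linarith
  refine (((hasDerivAt_rpow_const (p := θ + 3) (.inl hx.ne')).const_mul
    (3 * M / (θ + 3))).sub ((hasDerivAt_id x).mul (((hasDerivAt_id x).pow 2).mul
      (hφ.2.2.hasDerivAt_deriv hx).fun_neg))).congr_deriv ?_
  rw [show θ + 3 - 1 = θ + (2 : ℕ) by norm_num; ring, rpow_add_natCast hx.ne']
  simp only [Pi.mul_apply, Pi.pow_apply, id_eq, mul_neg, one_mul, Nat.cast_ofNat,
    Nat.add_one_sub_one, pow_one, mul_one, sub_neg_eq_add]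
  field_simp
  ring

theorem tendsto_rpow_sub_mul_sq_mul (hφ : IsBernstein φ) {θ : ℝ} (M : ℝ) (hθ : -3 < θ) :
    Tendsto (fun t => 3 * M / (θ + 3) * t ^ (θ + 3) - t * (t ^ 2 * -deriv (deriv φ) t))
      (𝓝[>] 0) (𝓝 0) := by
  obtain ⟨a, ha⟩ := hφ.exists_tendsto_nhdsGT_zero
  have hθ' : 0 < θ + 3 := by linarith
  have hid : Tendsto (fun t : ℝ => t) (𝓝[>] 0) (𝓝 0) := nhdsWithin_le_nhds
  have hpow : Tendsto (fun t : ℝ => t ^ (θ + 3)) (𝓝[>] 0) (𝓝 0) := by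
    simpa only [zero_rpow hθ'.ne'] using hid.rpow_const (.inr hθ'.le)
  simpa only [mul_zero, sub_zero] using (hpow.const_mul (3 * M / (θ + 3))).sub
    (hid.mul (hφ.tendsto_sq_mul_neg_deriv_deriv_nhdsGT_zero ha))

theorem integral_Ioc_id_stieltjesMeasure_le (hφ : IsBernstein φ) {θ M : ℝ} (hθ : -3 < θ)
    (hx : 0 < x) (hM : ∀ t ∈ Ioc 0 x, -deriv (deriv φ) t ≤ M * t ^ θ) :
    ∫ t in Ioc 0 x, t ∂stieltjesMeasure φ ≤ 3 * M / (θ + 3) * x ^ (θ + 3) := by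
  set w : ℝ → ℝ := fun t => t * (t ^ 2 * deriv (deriv (deriv φ)) t)
  set F' : ℝ → ℝ := fun t => 3 * t ^ 2 * (M * t ^ θ - -deriv (deriv φ) t) + w t
  have hw : IntegrableOn w (Ioc 0 x) :=
    (hφ.integrableOn_stieltjesMeasure_iff measurableSet_Ioc Ioc_subset_Ioi_self).1
      (hφ.integrableOn_Ioc_id_stieltjesMeasure hx)
  have hle : ∀ t ∈ Ioc 0 x, w t ≤ F' t := fun t ht =>
    le_add_of_nonneg_left (mul_nonneg (by positivity) (sub_nonneg.2 (hM t ht)))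
  have hnonneg : ∀ t ∈ Ioo 0 x, 0 ≤ F' t := fun t ht =>
    (mul_nonneg ht.1.le (mul_nonneg (sq_nonneg t) (hφ.2.2.deriv_deriv_nonneg ht.1))).trans
      (hle t ⟨ht.1, ht.2.le⟩)
  obtain ⟨hF', hF'_eq⟩ := integrableOn_Ioc_deriv_of_nonneg_of_tendsto hx
    (fun t ht => hφ.hasDerivAt_rpow_sub_mul_sq_mul M hθ ht.1) hnonneg
    (hφ.tendsto_rpow_sub_mul_sq_mul M hθ)
  calc ∫ t in Ioc 0 x, t ∂stieltjesMeasure φ = ∫ t in Ioc 0 x, w t :=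
        hφ.setIntegral_stieltjesMeasure measurableSet_Ioc Ioc_subset_Ioi_self
    _ ≤ ∫ t in Ioc 0 x, F' t := setIntegral_mono_on hw hF' measurableSet_Ioc hle
    _ = 3 * M / (θ + 3) * x ^ (θ + 3) - x * (x ^ 2 * -deriv (deriv φ) x) := by
        rw [hF'_eq, sub_zero]
    _ ≤ 3 * M / (θ + 3) * x ^ (θ + 3) := sub_le_self _
        (mul_nonneg hx.le (mul_nonneg (sq_nonneg x) (hφ.2.2.neg_deriv.nonneg hx)))

end IsBernstein

/-! ### Comparison of the kernels -/

section KernelBounds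

variable {σ : Measure ℝ} {x : ℝ}

theorem integral_min_one_div_le_two_mul_integral_div_self_add
    (hσ : IntegrableOn (fun t => (1 + t)⁻¹) (Ioi 0) σ)
    (hmin : IntegrableOn (fun t => min 1 (x / t)) (Ioi 0) σ) (hx : 0 < x) :
    ∫ t in Ioi 0, min 1 (x / t) ∂σ ≤ 2 * ∫ t in Ioi 0, x / (x + t) ∂σ := by
  rw [← integral_const_mul]
  refine setIntegral_mono_on hmin ((integrableOn_div_self_add hσ hx).const_mul 2)
    measurableSet_Ioi fun t (ht : 0 < t) => ?_
  rw [mul_div_assoc', min_le_iff, le_div_iff₀ (by positivity),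
    div_le_div_iff₀ ht (by positivity)]
  rcases le_total t x with h | h
  · left; linarith
  · right; nlinarith

theorem integral_div_self_add_le_integral_min_one_div
    (hσ : IntegrableOn (fun t => (1 + t)⁻¹) (Ioi 0) σ)
    (hmin : IntegrableOn (fun t => min 1 (x / t)) (Ioi 0) σ) (hx : 0 < x) :
    ∫ t in Ioi 0, x / (x + t) ∂σ ≤ ∫ t in Ioi 0, min 1 (x / t) ∂σ := by
  refine setIntegral_mono_on (integrableOn_div_self_add hσ hx) hmin measurableSet_Ioi
    fun t (ht : 0 < t) => le_min ((div_le_one (by positivity)).2 (by linarith)) ?_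
  gcongr
  linarith

theorem integral_Ioi_inv_sq_le_four_mul_integral_div_add_cube
    (hσ : IntegrableOn (fun t => (1 + t)⁻¹) (Ioi 0) σ)
    (hfar : IntegrableOn (fun t => (t ^ 2)⁻¹) (Ioi x) σ) (hx : 0 < x) :
    ∫ t in Ioi x, (t ^ 2)⁻¹ ∂σ ≤ 4 * ∫ t in Ioi 0, 2 * t / (x + t) ^ 3 ∂σ := by
  have hint := (hasDerivAt_integral_div_add_sq hσ hx).1.const_mul 4
  rw [← integral_const_mul]
  calc ∫ t in Ioi x, (t ^ 2)⁻¹ ∂σ ≤ ∫ t in Ioi x, 4 * (2 * t / (x + t) ^ 3) ∂σ := by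
        refine setIntegral_mono_on hfar (IntegrableOn.mono_set hint (Ioi_subset_Ioi hx.le))
          measurableSet_Ioi fun t (ht : x < t) => ?_
        have ht₀ : 0 < t := hx.trans ht
        calc (t ^ 2)⁻¹ = 4 * (2 * t / (t + t) ^ 3) := by field_simp; ring
          _ ≤ 4 * (2 * t / (x + t) ^ 3) := by gcongr
    _ ≤ ∫ t in Ioi 0, 4 * (2 * t / (x + t) ^ 3) ∂σ := by
        refine setIntegral_mono_set hint ?_ (Ioi_subset_Ioi hx.le).eventuallyLE
        filter_upwards [ae_restrict_mem measurableSet_Ioi] with t (ht : 0 < t)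
        positivity

theorem integral_div_add_cube_le (hσ : IntegrableOn (fun t => (1 + t)⁻¹) (Ioi 0) σ)
    (hnear : IntegrableOn (fun t => t) (Ioc 0 x) σ)
    (hfar : IntegrableOn (fun t => (t ^ 2)⁻¹) (Ioi x) σ) (hx : 0 < x) :
    ∫ t in Ioi 0, 2 * t / (x + t) ^ 3 ∂σ ≤
      2 / x ^ 3 * ∫ t in Ioc 0 x, t ∂σ + 2 * ∫ t in Ioi x, (t ^ 2)⁻¹ ∂σ := by
  have hint := (hasDerivAt_integral_div_add_sq hσ hx).1
  have hint_near := hint.mono_set (Ioc_subset_Ioi_self : Ioc 0 x ⊆ Ioi 0)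
  have hint_far := hint.mono_set (Ioi_subset_Ioi hx.le)
  rw [← Ioc_union_Ioi_eq_Ioi hx.le,
    setIntegral_union (Ioc_disjoint_Ioi le_rfl) measurableSet_Ioi hint_near hint_far,
    ← integral_const_mul, ← integral_const_mul]
  gcongr ?_ + ?_
  · refine setIntegral_mono_on hint_near (hnear.const_mul _) measurableSet_Ioc fun t ht => ?_
    have ht₀ := ht.1
    rw [div_mul_eq_mul_div]
    gcongr
    linarith
  · refine setIntegral_mono_on hint_far (hfar.const_mul _) measurableSet_Ioi
      fun t (ht : x < t) => ?_
    have ht₀ : 0 < t := hx.trans ht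
    calc 2 * t / (x + t) ^ 3 ≤ 2 * t / t ^ 3 := by gcongr; linarith
      _ = 2 * (t ^ 2)⁻¹ := by field_simp

end KernelBounds

/-! ### Weak lower scaling -/

theorem WLSC.mono_exponent {f : ℝ → ℝ} {θ θ' c x₀ : ℝ} (hf : WLSC f θ c x₀) (hc : 0 ≤ c)
    (hnonneg : ∀ x, x₀ < x → 0 ≤ f x) (hθ : θ' ≤ θ) : WLSC f θ' c x₀ := fun lam hlam x hx => by
  have := hnonneg x hx
  exact (hf lam hlam x hx).trans' (by gcongr)

theorem WLSC.mul_rpow_le {f : ℝ → ℝ} {θ c x₀ t x : ℝ} (hf : WLSC f θ c x₀) (hx₀ : 0 ≤ x₀)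
    (ht : x₀ < t) (htx : t ≤ x) : c * f t * x ^ θ ≤ f x * t ^ θ := by
  have ht₀ : 0 < t := hx₀.trans_lt ht
  have h := hf (x / t) ((one_le_div ht₀).2 htx) t ht
  rw [div_mul_cancel₀ _ ht₀.ne', div_rpow (ht₀.le.trans htx) ht₀.le] at h
  calc c * f t * x ^ θ = c * (x ^ θ / t ^ θ) * f t * t ^ θ := by field_simp
    _ ≤ f x * t ^ θ := by gcongr

theorem WLSC.exists_mul_rpow_le {f : ℝ → ℝ} {θ c x₀ : ℝ} (hf : WLSC f θ c x₀) (hc : 0 < c)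
    (hx₀ : 0 < x₀) (hθ : θ ≤ 0) (hanti : AntitoneOn f (Ioi 0)) (hpos : 0 < f (2 * x₀)) :
    ∃ m, 0 < m ∧ ∀ x, x₀ < x → m * x ^ θ ≤ f x := by
  have h2x₀ : 0 < 2 * x₀ := by linarith
  refine ⟨min (c * f (2 * x₀) / (2 * x₀) ^ θ) (f (2 * x₀) / x₀ ^ θ), by positivity,
    fun x hx => ?_⟩
  have hx' : 0 < x := hx₀.trans hx
  rcases le_total (2 * x₀) x with h | h
  · calc min _ _ * x ^ θ ≤ c * f (2 * x₀) / (2 * x₀) ^ θ * x ^ θ := by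
          gcongr; exact min_le_left _ _
      _ ≤ f x := by
          rw [div_mul_eq_mul_div, div_le_iff₀ (by positivity)]
          exact hf.mul_rpow_le hx₀.le (by linarith) h
  · calc min _ _ * x ^ θ ≤ f (2 * x₀) / x₀ ^ θ * x₀ ^ θ := by
          gcongr ?_ * ?_
          · exact min_le_right _ _
          · exact rpow_le_rpow_of_nonpos hx₀ hx.le hθ
      _ = f (2 * x₀) := div_mul_cancel₀ _ (by positivity)
      _ ≤ f x := hanti hx' h2x₀ h

namespace IsBernstein

variable {φ : ℝ → ℝ} {a b θ c x₀ x : ℝ}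

theorem exists_neg_deriv_deriv_le_mul_rpow (hφ : IsBernstein φ) (hθ : θ ≤ -2) (hx₀ : 0 < x₀) :
    ∃ M, ∀ t ∈ Ioc 0 x₀, -deriv (deriv φ) t ≤ M * t ^ θ := by
  obtain ⟨a, ha⟩ := hφ.exists_tendsto_nhdsGT_zero
  have hφx₀ := hφ.1 x₀ hx₀
  refine ⟨4 * φ x₀ * x₀ ^ (-θ - 2), fun t ⟨ht, htx₀⟩ => ?_⟩
  calc -deriv (deriv φ) t = t ^ 2 * -deriv (deriv φ) t * (t ^ (-θ - 2) * t ^ θ) := by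
        rw [← rpow_add ht, show -θ - 2 + θ = -(2 : ℕ) by push_cast; ring, rpow_neg ht.le,
          rpow_natCast]
        field_simp
    _ ≤ 4 * φ x₀ * (x₀ ^ (-θ - 2) * t ^ θ) := by
        gcongr ?_ * (?_ * _)
        · linarith [hφ.sq_mul_neg_deriv_deriv_le ha ht, hφ.limit_nonneg ha,
            hφ.monotoneOn ht hx₀ htx₀]
        · exact rpow_le_rpow ht.le htx₀ (by linarith)
    _ = 4 * φ x₀ * x₀ ^ (-θ - 2) * t ^ θ := by ring

theorem exists_neg_deriv_deriv_mul_rpow_le (hφ : IsBernstein φ) (hθ : θ ≤ -2) (hc : 0 < c)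
    (hx₀ : 0 ≤ x₀) (hscal : WLSC (fun x => -deriv (deriv φ) x) θ c x₀) :
    ∃ D, ∀ x, x₀ < x → ∀ t ∈ Ioc 0 x,
      -deriv (deriv φ) t * x ^ θ ≤ D * (-deriv (deriv φ) x * t ^ θ) := by
  have hcm := hφ.2.2.neg_deriv
  have hfar {x t : ℝ} (ht : x₀ < t) (htx : t ≤ x) :
      -deriv (deriv φ) t * x ^ θ ≤ c⁻¹ * (-deriv (deriv φ) x * t ^ θ) := by
    rw [le_inv_mul_iff₀ hc, ← mul_assoc]
    exact hscal.mul_rpow_le hx₀ ht htx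
  obtain rfl | hx₀ := hx₀.eq_or_lt
  · exact ⟨c⁻¹, fun x _ t ht => hfar ht.1 ht.2⟩
  have h2x₀ : 0 < 2 * x₀ := by linarith
  obtain hzero | hpos := (hcm.nonneg h2x₀).eq_or_lt
  · refine ⟨0, fun x _ t ht => ?_⟩
    rw [hcm.eq_zero_of_eq_zero h2x₀ hzero.symm ht.1, zero_mul, zero_mul]
  obtain ⟨M, hM⟩ := hφ.exists_neg_deriv_deriv_le_mul_rpow hθ hx₀
  obtain ⟨m, hm₀, hm⟩ := hscal.exists_mul_rpow_le hc hx₀ (by linarith) hcm.antitoneOn hpos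
  refine ⟨max c⁻¹ (M / m), fun x hx t ⟨ht, htx⟩ => ?_⟩
  have hx' : 0 < x := hx₀.trans hx
  have hψx := hcm.nonneg hx'
  rcases lt_or_ge x₀ t with h | h
  · refine (hfar h htx).trans ?_
    gcongr
    exact le_max_left _ _
  · calc -deriv (deriv φ) t * x ^ θ ≤ M * t ^ θ * x ^ θ := by gcongr; exact hM t ⟨ht, h⟩
      _ = M / m * (m * x ^ θ * t ^ θ) := by field_simp
      _ ≤ max c⁻¹ (M / m) * (-deriv (deriv φ) x * t ^ θ) := by
          gcongr
          · exact le_max_right _ _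
          · exact hm x hx

/-! ### Comparison of `φ` with its complete counterpart -/

theorem le_two_mul_stieltjesBernstein (hφ : IsBernstein φ) (ha : Tendsto φ (𝓝[>] 0) (𝓝 a))
    (hb : Tendsto (deriv φ) atTop (𝓝 b)) (hx : 0 < x) :
    φ x ≤ 2 * stieltjesBernstein a b (stieltjesMeasure φ) x := by
  obtain ⟨hint, heq⟩ := hφ.integral_min_one_div_stieltjesMeasure ha hb hx
  have hle := integral_min_one_div_le_two_mul_integral_div_self_add
    hφ.integrableOn_inv_one_add_stieltjesMeasure hint hx
  have hbx : 0 ≤ b * x := mul_nonneg (hφ.2.2.limit_nonneg hb) hx.le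
  rw [stieltjesBernstein]
  linarith [hφ.mul_deriv_le ha hx, hφ.limit_nonneg ha]

theorem stieltjesBernstein_le_two_mul (hφ : IsBernstein φ) (ha : Tendsto φ (𝓝[>] 0) (𝓝 a))
    (hb : Tendsto (deriv φ) atTop (𝓝 b)) (hx : 0 < x) :
    stieltjesBernstein a b (stieltjesMeasure φ) x ≤ 2 * φ x := by
  obtain ⟨hint, heq⟩ := hφ.integral_min_one_div_stieltjesMeasure ha hb hx
  have hle := integral_div_self_add_le_integral_min_one_div
    hφ.integrableOn_inv_one_add_stieltjesMeasure hint hx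
  have hnonneg : 0 ≤ x * deriv φ x := mul_nonneg hx.le (hφ.2.2.nonneg hx)
  rw [stieltjesBernstein]
  linarith [hφ.limit_nonneg ha]

theorem neg_deriv_deriv_le_four_mul (hφ : IsBernstein φ) (hx : 0 < x) :
    -deriv (deriv φ) x ≤
      4 * -deriv (deriv (stieltjesBernstein a b (stieltjesMeasure φ))) x := by
  have hσ := hφ.integrableOn_inv_one_add_stieltjesMeasure
  obtain ⟨hint, heq⟩ := hφ.integral_Ioi_inv_sq_stieltjesMeasure hx
  rw [neg_deriv_deriv_stieltjesBernstein hσ hx, ← heq]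
  exact integral_Ioi_inv_sq_le_four_mul_integral_div_add_cube hσ hint hx

theorem neg_deriv_deriv_stieltjesBernstein_le (hφ : IsBernstein φ) {D : ℝ} (hθ : -3 < θ)
    (hx : 0 < x)
    (hD : ∀ t ∈ Ioc 0 x, -deriv (deriv φ) t * x ^ θ ≤ D * (-deriv (deriv φ) x * t ^ θ)) :
    -deriv (deriv (stieltjesBernstein a b (stieltjesMeasure φ))) x ≤
      (2 + 6 * D / (θ + 3)) * -deriv (deriv φ) x := by
  have hσ := hφ.integrableOn_inv_one_add_stieltjesMeasure
  obtain ⟨hint, heq⟩ := hφ.integral_Ioi_inv_sq_stieltjesMeasure hx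
  have hnear := hφ.integral_Ioc_id_stieltjesMeasure_le (M := D * -deriv (deriv φ) x / x ^ θ) hθ hx
    fun t ht => by
      rw [div_mul_eq_mul_div, le_div_iff₀ (by positivity), mul_assoc D]
      exact hD t ht
  have hθ' : 0 < θ + 3 := by linarith
  calc -deriv (deriv (stieltjesBernstein a b (stieltjesMeasure φ))) x
      ≤ 2 / x ^ 3 * ∫ t in Ioc 0 x, t ∂stieltjesMeasure φ + 2 * -deriv (deriv φ) x := by
        rw [neg_deriv_deriv_stieltjesBernstein hσ hx, ← heq]
        exact integral_div_add_cube_le hσ (hφ.integrableOn_Ioc_id_stieltjesMeasure hx) hint hx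
    _ ≤ 2 / x ^ 3 * (3 * (D * -deriv (deriv φ) x / x ^ θ) / (θ + 3) * x ^ (θ + 3))
          + 2 * -deriv (deriv φ) x := by gcongr
    _ = (2 + 6 * D / (θ + 3)) * -deriv (deriv φ) x := by
        rw [show θ + 3 = θ + (3 : ℕ) by norm_num, rpow_add_natCast hx.ne']
        push_cast
        field_simp
        ring

theorem exists_neg_deriv_deriv_stieltjesBernstein_le (hφ : IsBernstein φ) (hθ : -3 < θ)
    (hc : 0 < c) (hx₀ : 0 ≤ x₀) (hscal : WLSC (fun x => -deriv (deriv φ) x) θ c x₀) :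
    ∃ C, ∀ x, x₀ < x → -deriv (deriv (stieltjesBernstein a b (stieltjesMeasure φ))) x ≤
      C * -deriv (deriv φ) x := by
  have hscal' : WLSC (fun x => -deriv (deriv φ) x) (min θ (-2)) c x₀ :=
    hscal.mono_exponent hc.le (fun x hx => hφ.2.2.neg_deriv.nonneg (hx₀.trans_lt hx))
      (min_le_left _ _)
  obtain ⟨D, hD⟩ := hφ.exists_neg_deriv_deriv_mul_rpow_le (min_le_right _ _) hc hx₀ hscal'
  exact ⟨_, fun x hx => hφ.neg_deriv_deriv_stieltjesBernstein_le (lt_min hθ (by norm_num))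
    (hx₀.trans_lt hx) (hD x hx)⟩

end IsBernstein

theorem exists_comparable_complete_bernstein_general
    (φ : ℝ → ℝ) (θ c x₀ : ℝ)
    (hBern : IsBernstein φ)
    (hθ : -3 < θ) (hc : 0 < c) (hx₀ : 0 ≤ x₀)
    (hscal : WLSC (fun x => -(deriv (deriv φ) x)) θ c x₀) :
    ∃ f : ℝ → ℝ, IsCompleteBernstein f ∧
      ∃ C : ℝ, 1 ≤ C ∧
        (∀ x : ℝ, 0 < x → C⁻¹ * φ x ≤ f x ∧ f x ≤ C * φ x) ∧
        (∀ x : ℝ, x₀ < x →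
          C⁻¹ * -(deriv (deriv φ) x) ≤ -(deriv (deriv f) x) ∧
            -(deriv (deriv f) x) ≤ C * -(deriv (deriv φ) x)) := by
  obtain ⟨a, ha⟩ := hBern.exists_tendsto_nhdsGT_zero
  obtain ⟨b, hb⟩ := hBern.2.2.exists_tendsto_atTop
  obtain ⟨C, hC⟩ := hBern.exists_neg_deriv_deriv_stieltjesBernstein_le (a := a) (b := b)
    hθ hc hx₀ hscal
  have hf := isCompleteBernstein_stieltjesBernstein
    hBern.integrableOn_inv_one_add_stieltjesMeasure (hBern.limit_nonneg ha)
    (hBern.2.2.limit_nonneg hb)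
  have h4 : 4 ≤ max 4 C := le_max_left _ _
  refine ⟨_, hf, max 4 C, by linarith, fun x hx => ⟨?_, ?_⟩, fun x hx => ⟨?_, ?_⟩⟩
  · rw [inv_mul_le_iff₀ (by linarith)]
    nlinarith [hBern.le_two_mul_stieltjesBernstein ha hb hx, hf.1.1 x hx]
  · nlinarith [hBern.stieltjesBernstein_le_two_mul ha hb hx, hBern.1 x hx]
  · have hx' := hx₀.trans_lt hx
    rw [inv_mul_le_iff₀ (by linarith)]
    nlinarith [hBern.neg_deriv_deriv_le_four_mul (a := a) (b := b) hx',
      hf.1.2.2.neg_deriv.nonneg hx']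
  · exact (hC x hx).trans (mul_le_mul_of_nonneg_right (le_max_right _ _)
      (hBern.2.2.neg_deriv.nonneg (hx₀.trans_lt hx)))

/-- If `φ` is a Bernstein function with `−φ'' ∈ WLSC(α−2,c,x₀)`,
then there is a complete Bernstein function `f` with `f ≈ φ` on `(0,∞)` and
`−f'' ≈ −φ''` on `(x₀,∞)`. -/
theorem exists_comparable_complete_bernstein
    (φ : ℝ → ℝ) (α c x₀ : ℝ)
    (hBern : IsBernstein φ)
    (hα : 0 < α) (hc : 0 < c) (hc1 : c ≤ 1) (hx₀ : 0 ≤ x₀)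
    (hscal : WLSC (fun x => -(deriv (deriv φ) x)) (α - 2) c x₀) :
    ∃ f : ℝ → ℝ, IsCompleteBernstein f ∧
      ∃ C : ℝ, 1 ≤ C ∧
        (∀ x : ℝ, 0 < x → C⁻¹ * φ x ≤ f x ∧ f x ≤ C * φ x) ∧
        (∀ x : ℝ, x₀ < x →
          C⁻¹ * -(deriv (deriv φ) x) ≤ -(deriv (deriv f) x) ∧
            -(deriv (deriv f) x) ≤ C * -(deriv (deriv φ) x)) :=
  exists_comparable_complete_bernstein_general φ (α - 2) c x₀ hBern (by linarith) hc hx₀ hscal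
end
end

section
/- Let f be a completely monotone function that has the doubling property on (x₀, ∞) for some x₀ ≥ 0, i.e. there is C₁ ≥ 1 such that C₁^{−1} f(x) ≤ f(2x) ≤ C₁ f(x) for all x > x₀. Then there is C > 0 such that f(x) ≥ C·x·|f'(x)| for all x > x₀. -/
/-!
By convexity the graph of `f` lies above its tangent at `x`; comparing at `x / 2` and at `2 * x`
bounds `x * |f' x|` by a multiple of `max (f (x / 2)) (f (2 * x))`. Doubling controls `f (2 * x)` by
`f x` for all `x > x₀`, but `f (x / 2)` only for `x > 2 * x₀`. On the remaining interval
`(x₀, 2 * x₀]` one has `f (x / 2) ≤ K * f (2 * x)` by compactness, as long as `f` is positive beyond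
`x₀`. If `f` has a zero `y > x₀`, doubling propagates it to all `2 ^ n * y`, convexity to the
intervals between them, and doubling again back to the whole of `(x₀, ∞)`.
-/

open Real Set

noncomputable section

theorem IsCompletelyMonotone.nonneg_s12 {f : ℝ → ℝ} (hf : IsCompletelyMonotone f) {x : ℝ}
    (hx : 0 < x) : 0 ≤ f x := by
  simpa using hf.2 0 x hx

theorem IsCompletelyMonotone.differentiableOn {f : ℝ → ℝ} (hf : IsCompletelyMonotone f) :
    DifferentiableOn ℝ f (Ioi 0) :=
  hf.1.differentiableOn (by simp)

theorem IsCompletelyMonotone.convexOn {f : ℝ → ℝ} (hf : IsCompletelyMonotone f) :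
    ConvexOn ℝ (Ioi 0) f := by
  have hf' : DifferentiableOn ℝ (deriv f) (Ioi 0) :=
    ((contDiffOn_infty_iff_deriv_of_isOpen isOpen_Ioi).1 hf.1).2.differentiableOn (by simp)
  refine convexOn_of_deriv2_nonneg' (convex_Ioi 0) hf.differentiableOn hf' fun x hx ↦ ?_
  simpa [iteratedDeriv_eq_iterate] using hf.2 2 x hx

theorem abs_deriv_le_max_slope_of_convexOn {s : Set ℝ} {f : ℝ → ℝ} {a b x : ℝ}
    (hf : ConvexOn ℝ s f) (ha : a ∈ s) (hb : b ∈ s) (hax : a < x) (hxb : x < b)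
    (hfx : DifferentiableAt ℝ f x) : |deriv f x| ≤ max (-slope f a x) (slope f x b) := by
  have hx : x ∈ s := hf.1.ordConnected.out ha hb ⟨hax.le, hxb.le⟩
  rw [abs_le']
  exact ⟨le_max_of_le_right (hf.deriv_le_slope hx hb hxb hfx),
    le_max_of_le_left (neg_le_neg (hf.slope_le_deriv ha hx hax hfx))⟩

theorem mul_abs_deriv_le_of_convexOn {f : ℝ → ℝ} {x : ℝ} (hf : ConvexOn ℝ (Ioi 0) f)
    (hx : 0 < x) (hfx : DifferentiableAt ℝ f x) :
    x * |deriv f x| ≤ max (2 * (f (x / 2) - f x)) (f (2 * x) - f x) := by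
  have hslope := abs_deriv_le_max_slope_of_convexOn hf (half_pos hx) (by positivity : 0 < 2 * x)
    (half_lt_self hx) (by linarith) hfx
  have hleft : x * -slope f (x / 2) x = 2 * (f (x / 2) - f x) := by
    rw [slope_def_field, sub_half]
    field_simp
    ring
  have hright : x * slope f x (2 * x) = f (2 * x) - f x := by
    rw [slope_def_field, two_mul, add_sub_cancel_right]
    field_simp
  calc x * |deriv f x| ≤ x * max (-slope f (x / 2) x) (slope f x (2 * x)) := by gcongr
    _ = max (2 * (f (x / 2) - f x)) (f (2 * x) - f x) := by
      rw [mul_max_of_nonneg _ _ hx.le, hleft, hright]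

theorem exists_forall_le_mul_of_isCompact {α : Type*} [TopologicalSpace α] {s : Set α}
    {u v : α → ℝ} (hs : IsCompact s) (hu : ContinuousOn u s) (hv : ContinuousOn v s)
    (hpos : ∀ x ∈ s, 0 < v x) : ∃ K, 0 ≤ K ∧ ∀ x ∈ s, u x ≤ K * v x := by
  have hcont : ContinuousOn (fun x ↦ u x / v x) s := hu.div hv fun x hx ↦ (hpos x hx).ne'
  obtain ⟨K, hK, hle⟩ := (hs.bddAbove_image hcont).exists_ge 0
  exact ⟨K, hK, fun x hx ↦ (div_le_iff₀ (hpos x hx)).1 (hle _ (mem_image_of_mem _ hx))⟩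

/-- The doubling property of `f` on `(x₀, ∞)` with constant `C`: the values of `f` at `x` and at
`2 * x` are comparable up to the factor `C`. The lower bound `C⁻¹ * f x ≤ f (2 * x)` is stated
without division. -/
structure HasDoublingProperty (f : ℝ → ℝ) (x₀ C : ℝ) : Prop where
  const_pos : 0 < C
  le_mul_apply_two_mul : ∀ x, x₀ < x → f x ≤ C * f (2 * x)
  apply_two_mul_le : ∀ x, x₀ < x → f (2 * x) ≤ C * f x

namespace HasDoublingProperty

variable {f : ℝ → ℝ} {x₀ C : ℝ}

theorem apply_two_mul_eq_zero_iff (h : HasDoublingProperty f x₀ C) {x : ℝ} (hx : x₀ < x) :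
    f (2 * x) = 0 ↔ f x = 0 := by
  have hlower := h.le_mul_apply_two_mul x hx
  have hupper := h.apply_two_mul_le x hx
  constructor <;> intro hzero <;> simp only [hzero, mul_zero] at hlower hupper
  · exact hlower.antisymm (nonneg_of_mul_nonneg_right hupper h.const_pos)
  · exact hupper.antisymm (nonneg_of_mul_nonneg_right hlower h.const_pos)

theorem apply_two_pow_mul_eq_zero_iff (h : HasDoublingProperty f x₀ C) (hx₀ : 0 ≤ x₀) {x : ℝ}
    (hx : x₀ < x) (n : ℕ) : f (2 ^ n * x) = 0 ↔ f x = 0 := by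
  induction n with
  | zero => simp
  | succ n ih =>
    have hlt : x₀ < 2 ^ n * x :=
      hx.trans_le (le_mul_of_one_le_left (hx₀.trans hx.le) (one_le_pow₀ one_le_two))
    rw [pow_succ', mul_assoc, h.apply_two_mul_eq_zero_iff hlt, ih]

theorem apply_eq_zero_of_convexOn (h : HasDoublingProperty f x₀ C) (hx₀ : 0 ≤ x₀)
    (hconv : ConvexOn ℝ (Ioi x₀) f) (hnonneg : ∀ x, x₀ < x → 0 ≤ f x) {x y : ℝ} (hx : x₀ < x)
    (hy : x₀ < y) (hfy : f y = 0) : f x = 0 := by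
  have exists_le_two_pow_mul : ∀ a b : ℝ, x₀ < b → ∃ n : ℕ, a ≤ 2 ^ n * b := fun a b hb ↦
    (pow_unbounded_of_one_lt (a / b) one_lt_two).imp fun _ hn ↦
      ((div_lt_iff₀ (hx₀.trans_lt hb)).1 hn).le
  obtain ⟨n, hn⟩ := exists_le_two_pow_mul y x hx
  obtain ⟨m, hm⟩ := exists_le_two_pow_mul (2 ^ n * x) y hy
  have hle : f (2 ^ n * x) ≤ max (f y) (f (2 ^ m * y)) :=
    hconv.le_max_of_mem_Icc hy (hy.trans_le (hn.trans hm)) ⟨hn, hm⟩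
  rw [(h.apply_two_pow_mul_eq_zero_iff hx₀ hy m).2 hfy, hfy, max_self] at hle
  exact (h.apply_two_pow_mul_eq_zero_iff hx₀ hx n).1
    (hle.antisymm (hnonneg _ (hy.trans_le hn)))

theorem exists_apply_half_le (h : HasDoublingProperty f x₀ C) (hx₀ : 0 ≤ x₀)
    (hcont : ContinuousOn f (Ioi 0)) (hpos : ∀ x, x₀ < x → 0 < f x) :
    ∃ K, ∀ x, x₀ < x → f (x / 2) ≤ K * f x := by
  have hfar : ∀ x, 2 * x₀ < x → f (x / 2) ≤ C * f x := fun x hx ↦ by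
    simpa [mul_div_cancel₀] using h.le_mul_apply_two_mul (x / 2) (by linarith)
  obtain rfl | hx₀ := hx₀.eq_or_lt
  · exact ⟨C, fun x hx ↦ hfar x (by simpa using hx)⟩
  -- Comparing with `f (2 * x)` instead of `f x` avoids the endpoint `x₀`, where `f` could vanish.
  obtain ⟨K, hK, hnear⟩ : ∃ K, 0 ≤ K ∧ ∀ x ∈ Icc x₀ (2 * x₀), f (x / 2) ≤ K * f (2 * x) :=
    exists_forall_le_mul_of_isCompact isCompact_Icc
      (hcont.comp (by fun_prop) fun x hx ↦ half_pos (hx₀.trans_le hx.1))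
      (hcont.comp (by fun_prop) fun x hx ↦ mul_pos two_pos (hx₀.trans_le hx.1))
      fun x hx ↦ hpos _ (by linarith [hx.1])
  refine ⟨max C (K * C), fun x hx ↦ ?_⟩
  have hfx := (hpos x hx).le
  obtain hx2 | hx2 := lt_or_ge (2 * x₀) x
  · calc f (x / 2) ≤ C * f x := hfar x hx2
      _ ≤ max C (K * C) * f x := by gcongr; exact le_max_left _ _
  · calc f (x / 2) ≤ K * f (2 * x) := hnear x ⟨hx.le, hx2⟩
      _ ≤ K * (C * f x) := by gcongr; exact h.apply_two_mul_le x hx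
      _ = K * C * f x := (mul_assoc _ _ _).symm
      _ ≤ max C (K * C) * f x := by gcongr; exact le_max_right _ _

theorem exists_mul_abs_deriv_le_of_pos (h : HasDoublingProperty f x₀ C) (hx₀ : 0 ≤ x₀)
    (hconv : ConvexOn ℝ (Ioi 0) f) (hdiff : DifferentiableOn ℝ f (Ioi x₀))
    (hpos : ∀ x, x₀ < x → 0 < f x) :
    ∃ c, 0 < c ∧ ∀ x, x₀ < x → c * (x * |deriv f x|) ≤ f x := by
  obtain ⟨K, hK⟩ := h.exists_apply_half_le hx₀ (hconv.continuousOn isOpen_Ioi) hpos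
  have hmax : 0 < max (2 * K) C := lt_max_of_lt_right h.const_pos
  refine ⟨(max (2 * K) C)⁻¹, inv_pos.2 hmax, fun x hx ↦ (inv_mul_le_iff₀ hmax).2 ?_⟩
  have hfx := (hpos x hx).le
  calc x * |deriv f x| ≤ max (2 * (f (x / 2) - f x)) (f (2 * x) - f x) :=
        mul_abs_deriv_le_of_convexOn hconv (hx₀.trans_lt hx)
          (hdiff.differentiableAt (Ioi_mem_nhds hx))
    _ ≤ max (2 * K * f x) (C * f x) :=
        max_le_max (by linarith [hK x hx]) (by linarith [h.apply_two_mul_le x hx])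
    _ = max (2 * K) C * f x := (max_mul_of_nonneg _ _ hfx).symm

end HasDoublingProperty

theorem completely_monotone_doubling_deriv_bound_general {f : ℝ → ℝ} {x₀ C₁ : ℝ}
    (hconv : ConvexOn ℝ (Ioi 0) f) (hdiff : DifferentiableOn ℝ f (Ioi x₀))
    (hnonneg : ∀ x, x₀ < x → 0 ≤ f x) (hx₀ : 0 ≤ x₀) (hdbl : HasDoublingProperty f x₀ C₁) :
    ∃ C, 0 < C ∧ ∀ x, x₀ < x → C * (x * |deriv f x|) ≤ f x := by
  by_cases hpos : ∀ x, x₀ < x → 0 < f x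
  · exact hdbl.exists_mul_abs_deriv_le_of_pos hx₀ hconv hdiff hpos
  · push Not at hpos
    obtain ⟨y, hy, hfy⟩ := hpos
    have hzero : EqOn f 0 (Ioi x₀) := fun x hx ↦
      hdbl.apply_eq_zero_of_convexOn hx₀ (hconv.subset (Ioi_subset_Ioi hx₀) (convex_Ioi x₀))
        hnonneg hx hy (hfy.antisymm (hnonneg y hy))
    refine ⟨1, one_pos, fun x hx ↦ ?_⟩
    have hderiv : deriv f x = 0 := by
      simpa using (hzero.eventuallyEq_of_mem (Ioi_mem_nhds hx)).deriv_eq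
    simp [hderiv, hnonneg x hx]

/-- A completely monotone function with the doubling property on
`(x₀,∞)` satisfies `f(x) ≥ C·x·|f'(x)|` there. -/
theorem completely_monotone_doubling_deriv_bound
    (f : ℝ → ℝ) (x₀ C₁ : ℝ)
    (hf : IsCompletelyMonotone f)
    (hx₀ : 0 ≤ x₀) (hC₁ : 1 ≤ C₁)
    (hdbl : ∀ x : ℝ, x₀ < x → C₁⁻¹ * f x ≤ f (2 * x) ∧ f (2 * x) ≤ C₁ * f x) :
    ∃ C : ℝ, 0 < C ∧ ∀ x : ℝ, x₀ < x → C * (x * |deriv f x|) ≤ f x := by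
  have hC₁_pos : 0 < C₁ := one_pos.trans_le hC₁
  exact completely_monotone_doubling_deriv_bound_general hf.convexOn
    (hf.differentiableOn.mono (Ioi_subset_Ioi hx₀)) (fun x hx ↦ hf.nonneg_s12 (hx₀.trans_lt hx)) hx₀
    ⟨hC₁_pos, fun x hx ↦ (inv_mul_le_iff₀ hC₁_pos).1 (hdbl x hx).1, fun x hx ↦ (hdbl x hx).2⟩
end
end

section
/- Let φ be a Bernstein function with representation φ(λ) = a + bλ + ∫_{(0,∞)} (1 − e^{−λs}) μ(ds). If −φ'' ∈ WUSC(β−2, C, x₀) for some C ≥ 1, x₀ ≥ 0 and β < 1, then for all x > x₀: φ'(x) ≤ (C/(1−β))·x·(−φ''(x)) + b. -/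
open MeasureTheory Real Set

noncomputable section

/-- Weak upper scaling property at infinity. -/
def WUSC (f : ℝ → ℝ) (θ C x₀ : ℝ) : Prop :=
  ∀ lam : ℝ, 1 ≤ lam → ∀ x : ℝ, x₀ < x → f (lam * x) ≤ C * lam ^ θ * f x

/-!
Scaling bounds `-φ''(y)` for `y > x` by `C (y / x) ^ (β - 2) (-φ''(x))`. As `β < 1`, this is
integrable at infinity, and its integral over `(x, ∞)` is `C / (1 - β) · x · (-φ''(x))`; the
integral of `-φ''` itself is `φ'(x) - φ'(∞) = φ'(x) - b`.
-/

open Filter Topology ProbabilityTheory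

theorem WUSC.le_mul_rpow {f : ℝ → ℝ} {θ C x₀ x y : ℝ} (hf : WUSC f θ C x₀) (hx₀ : x₀ < x)
    (hx : 0 < x) (hxy : x ≤ y) : f y ≤ C * f x * x ^ (-θ) * y ^ θ := by
  calc f y = f (y / x * x) := by rw [div_mul_cancel₀ y hx.ne']
    _ ≤ C * (y / x) ^ θ * f x := hf (y / x) ((one_le_div hx).2 hxy) x hx₀
    _ = C * f x * x ^ (-θ) * y ^ θ := by
      rw [div_rpow (hx.le.trans hxy) hx.le, rpow_neg hx.le]
      ring

theorem le_add_rpow_of_neg_deriv_le_rpow {g : ℝ → ℝ} {l K p x : ℝ} (hx : 0 < x) (hp : p < 0)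
    (hcont : ContinuousOn g (Ici x)) (hdiff : DifferentiableOn ℝ g (Ioi x))
    (hlim : Tendsto g atTop (𝓝 l)) (hderiv : ∀ y, x < y → -deriv g y ≤ K * y ^ (p - 1)) :
    g x ≤ l + K / -p * x ^ p := by
  have hpow (y : ℝ) (hy : 0 < y) :
      HasDerivAt (fun t => K / -p * t ^ p) (-(K * y ^ (p - 1))) y :=
    ((hasDerivAt_rpow_const (Or.inl hy.ne')).const_mul (K / -p)).congr_deriv (by
      field_simp [hp.ne])
  have hsub (y : ℝ) (hy : x < y) :
      HasDerivAt (fun t => g t - K / -p * t ^ p) (deriv g y + K * y ^ (p - 1)) y :=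
    ((hdiff.differentiableAt (Ioi_mem_nhds hy)).hasDerivAt.sub (hpow y (hx.trans hy))).congr_deriv
      (sub_neg_eq_add _ _)
  have hmono : MonotoneOn (fun t => g t - K / -p * t ^ p) (Ici x) := by
    refine monotoneOn_of_hasDerivWithinAt_nonneg (convex_Ici x)
      (f' := fun y => deriv g y + K * y ^ (p - 1)) ?_ ?_ ?_
    · exact hcont.sub fun y hy => (hpow y (hx.trans_le hy)).continuousAt.continuousWithinAt
    · rw [interior_Ici]
      exact fun y hy => (hsub y hy).hasDerivWithinAt
    · rw [interior_Ici]
      intro y hy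
      linarith [hderiv y hy]
  have hlim' : Tendsto (fun t => g t - K / -p * t ^ p) atTop (𝓝 l) := by
    have hzero : Tendsto (fun t : ℝ => t ^ p) atTop (𝓝 0) := by
      simpa only [neg_neg] using tendsto_rpow_neg_atTop (neg_pos.2 hp)
    simpa only [mul_zero, sub_zero] using hlim.sub (hzero.const_mul (K / -p))
  have hle : g x - K / -p * x ^ p ≤ l :=
    ge_of_tendsto hlim' <| (eventually_ge_atTop x).mono fun t ht => hmono self_mem_Ici ht ht
  linarith

theorem bernstein_deriv_upper_bound_of_wusc_general {φ : ℝ → ℝ} {b β C x₀ : ℝ}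
    (hdiff : DifferentiableOn ℝ (deriv φ) (Ioi x₀)) (hlim : Tendsto (deriv φ) atTop (𝓝 b))
    (hβ : β < 1) (hx₀ : 0 ≤ x₀) (hscal : WUSC (fun x => -deriv (deriv φ) x) (β - 2) C x₀)
    (x : ℝ) (hx : x₀ < x) :
    deriv φ x ≤ C / (1 - β) * (x * -deriv (deriv φ) x) + b := by
  have hx_pos : 0 < x := hx₀.trans_lt hx
  set K := C * -deriv (deriv φ) x * x ^ (-(β - 2)) with hK
  have hderiv (y : ℝ) (hxy : x < y) : -deriv (deriv φ) y ≤ K * y ^ (β - 1 - 1) := by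
    rw [show β - 1 - 1 = β - 2 by ring]
    exact hscal.le_mul_rpow hx hx_pos hxy.le
  have hpow : x ^ (-(β - 2)) * x ^ (β - 1) = x := by
    rw [← rpow_add hx_pos, show -(β - 2) + (β - 1) = 1 by ring, rpow_one]
  calc deriv φ x ≤ b + K / -(β - 1) * x ^ (β - 1) :=
        le_add_rpow_of_neg_deriv_le_rpow hx_pos (sub_neg.2 hβ)
          (hdiff.continuousOn.mono (Ici_subset_Ioi.2 hx)) (hdiff.mono (Ioi_subset_Ioi hx.le))
          hlim hderiv
    _ = C / (1 - β) * (x ^ (-(β - 2)) * x ^ (β - 1) * -deriv (deriv φ) x) + b := by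
        rw [hK, neg_sub β 1]
        ring
    _ = C / (1 - β) * (x * -deriv (deriv φ) x) + b := by rw [hpow]

theorem one_sub_exp_neg_mul_le {x s : ℝ} (hs : 0 ≤ s) :
    1 - exp (-x * s) ≤ max 1 x * min 1 s := by
  rcases le_total 1 s with h | h
  · rw [min_eq_left h, mul_one]
    linarith [exp_pos (-x * s), le_max_left 1 x]
  · rw [min_eq_right h]
    linarith [add_one_le_exp (-x * s), mul_le_mul_of_nonneg_right (le_max_right 1 x) hs]

theorem mul_exp_neg_mul_le {x s : ℝ} (hx : 0 < x) (hs : 0 ≤ s) :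
    s * exp (-x * s) ≤ max 1 x⁻¹ * min 1 s := by
  rcases le_total 1 s with h | h
  · rw [min_eq_left h, mul_one]
    calc s * exp (-x * s) = x⁻¹ * (x * s * exp (-(x * s))) := by
          rw [neg_mul]
          field_simp
      _ ≤ x⁻¹ * 1 := by
          gcongr
          exact (mul_exp_neg_le_exp_neg_one _).trans (exp_le_one_iff.2 (by norm_num))
      _ ≤ max 1 x⁻¹ := by rw [mul_one]; exact le_max_right 1 x⁻¹
  · rw [min_eq_right h]
    calc s * exp (-x * s) ≤ s * 1 := by
          gcongr
          exact exp_le_one_iff.2 (by nlinarith)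
      _ ≤ max 1 x⁻¹ * s := by rw [mul_comm]; gcongr; exact le_max_left 1 x⁻¹

/-- The Lévy measures of Bernstein functions, encoded as measures on all of `ℝ` giving no mass to
`(-∞, 0]`, so that the measure `μ` of the Lévy–Khintchine representation enters as its restriction
to `(0, ∞)`. -/
structure IsBernsteinLevyMeasure (ν : Measure ℝ) : Prop where
  ae_pos : ∀ᵐ s ∂ν, 0 < s
  integrable_min : Integrable (fun s => min 1 s) ν

namespace IsBernsteinLevyMeasure

theorem restrict_Ioi {μ : Measure ℝ}
    (hμ : ∫⁻ s in Ioi (0 : ℝ), ENNReal.ofReal (min 1 s) ∂μ ≠ ⊤) :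
    IsBernsteinLevyMeasure (μ.restrict (Ioi 0)) := by
  have hpos : ∀ᵐ s ∂μ.restrict (Ioi (0 : ℝ)), 0 < s := ae_restrict_mem measurableSet_Ioi
  refine ⟨hpos, (continuous_const.min continuous_id).aestronglyMeasurable, ?_⟩
  rw [hasFiniteIntegral_iff_ofReal (hpos.mono fun s hs => (lt_min one_pos hs).le)]
  exact hμ.lt_top

variable {ν : Measure ℝ} (hν : IsBernsteinLevyMeasure ν)
include hν

theorem integrable_one_sub_exp_neg_mul {x : ℝ} (hx : 0 ≤ x) :
    Integrable (fun s => 1 - exp (-x * s)) ν := by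
  refine (hν.integrable_min.const_mul (max 1 x)).mono'
    (Continuous.aestronglyMeasurable (by fun_prop)) ?_
  filter_upwards [hν.ae_pos] with s hs
  have hexp : exp (-x * s) ≤ 1 := exp_le_one_iff.2 (by nlinarith)
  rw [norm_of_nonneg (sub_nonneg.2 hexp)]
  exact one_sub_exp_neg_mul_le hs.le

theorem integrable_mul_exp_neg_mul {x : ℝ} (hx : 0 < x) :
    Integrable (fun s => s * exp (-x * s)) ν := by
  refine (hν.integrable_min.const_mul (max 1 x⁻¹)).mono'
    (Continuous.aestronglyMeasurable (by fun_prop)) ?_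
  filter_upwards [hν.ae_pos] with s hs
  rw [norm_of_nonneg (by positivity)]
  exact mul_exp_neg_mul_le hx hs.le

theorem ae_norm_mul_exp_neg_mul_le (x : ℝ) :
    ∀ᵐ s ∂ν, ∀ y ∈ Ici x, ‖s * exp (-y * s)‖ ≤ s * exp (-x * s) := by
  filter_upwards [hν.ae_pos] with s hs y (hxy : x ≤ y)
  rw [norm_of_nonneg (by positivity)]
  gcongr

theorem hasDerivAt_integral_one_sub_exp_neg_mul {x : ℝ} (hx : 0 < x) :
    HasDerivAt (fun y => ∫ s, (1 - exp (-y * s)) ∂ν) (∫ s, s * exp (-x * s) ∂ν) x := by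
  refine (hasDerivAt_integral_of_dominated_loc_of_deriv_le
    (F' := fun y s => s * exp (-y * s)) (Ici_mem_nhds (half_lt_self hx))
    (.of_forall fun y => Continuous.aestronglyMeasurable (by fun_prop))
    (hν.integrable_one_sub_exp_neg_mul hx.le)
    (Continuous.aestronglyMeasurable (by fun_prop))
    (hν.ae_norm_mul_exp_neg_mul_le (x / 2))
    (hν.integrable_mul_exp_neg_mul (half_pos hx))
    (.of_forall fun s y _ => ?_)).2
  exact (((hasDerivAt_id y).neg.mul_const s).exp.const_sub 1).congr_deriv (by simp [mul_comm])

theorem differentiableOn_integral_mul_exp_neg_mul :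
    DifferentiableOn ℝ (fun x => ∫ s, s * exp (-x * s) ∂ν) (Ioi 0) := by
  -- The integral is a Laplace transform of the measure `s ν(ds)`.
  set σ := ν.withDensity ENNReal.ofReal
  have htoReal : ∀ᵐ s ∂ν, (ENNReal.ofReal s).toReal = s :=
    hν.ae_pos.mono fun s hs => ENNReal.toReal_ofReal hs.le
  have hmgf (x : ℝ) : ∫ s, s * exp (-x * s) ∂ν = mgf id σ (-x) := by
    rw [mgf, integral_withDensity_eq_integral_toReal_smul ENNReal.measurable_ofReal
      (.of_forall fun s => ENNReal.ofReal_lt_top)]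
    refine integral_congr_ae (htoReal.mono fun s hs => ?_)
    simp only [hs, id, smul_eq_mul]
  have hsubset : Iio 0 ⊆ integrableExpSet id σ := by
    intro t (ht : t < 0)
    refine (integrable_withDensity_iff_integrable_smul' ENNReal.measurable_ofReal
      (.of_forall fun s => ENNReal.ofReal_lt_top)).2 ?_
    refine (hν.integrable_mul_exp_neg_mul (neg_pos.2 ht)).congr (htoReal.mono fun s hs => ?_)
    simp only [hs, id, smul_eq_mul, neg_neg]
  simp only [hmgf]
  exact differentiableOn_mgf.comp (differentiableOn_neg _) fun x hx =>
    interior_maximal hsubset isOpen_Iio (mem_Iio.2 (neg_lt_zero.2 hx))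

theorem tendsto_integral_mul_exp_neg_mul_atTop :
    Tendsto (fun x => ∫ s, s * exp (-x * s) ∂ν) atTop (𝓝 0) := by
  have hpointwise : ∀ᵐ s ∂ν, Tendsto (fun x => s * exp (-x * s)) atTop (𝓝 0) := by
    filter_upwards [hν.ae_pos] with s hs
    simpa only [mul_zero, Function.comp_def] using (tendsto_exp_atBot.comp
      (tendsto_neg_atTop_atBot.atBot_mul_const hs)).const_mul s
  rw [← integral_zero ℝ ℝ (μ := ν)]
  refine tendsto_integral_filter_of_dominated_convergence (fun s => s * exp (-1 * s))
    (.of_forall fun x => Continuous.aestronglyMeasurable (by fun_prop)) ?_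
    (hν.integrable_mul_exp_neg_mul one_pos) hpointwise
  filter_upwards [eventually_ge_atTop 1] with x hx
  exact (hν.ae_norm_mul_exp_neg_mul_le 1).mono fun s hs => hs x hx

variable {φ : ℝ → ℝ} {a b : ℝ}
  (hφ : ∀ x : ℝ, 0 < x → φ x = a + b * x + ∫ s, (1 - exp (-x * s)) ∂ν)
include hφ

theorem deriv_bernstein_eqOn :
    EqOn (deriv φ) (fun x => b + ∫ s, s * exp (-x * s) ∂ν) (Ioi 0) := by
  intro x hx
  have hlin : HasDerivAt (fun y => a + b * y) b x :=
    (((hasDerivAt_id x).const_mul b).const_add a).congr_deriv (mul_one b)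
  have heq : φ =ᶠ[𝓝 x] fun y => a + b * y + ∫ s, (1 - exp (-y * s)) ∂ν :=
    eventually_of_mem (Ioi_mem_nhds hx) hφ
  exact ((hlin.add (hν.hasDerivAt_integral_one_sub_exp_neg_mul hx)).congr_of_eventuallyEq heq).deriv

theorem differentiableOn_deriv_bernstein : DifferentiableOn ℝ (deriv φ) (Ioi 0) :=
  (hν.differentiableOn_integral_mul_exp_neg_mul.const_add b).congr (hν.deriv_bernstein_eqOn hφ)

theorem tendsto_deriv_bernstein_atTop : Tendsto (deriv φ) atTop (𝓝 b) := by
  have hlim := hν.tendsto_integral_mul_exp_neg_mul_atTop.const_add b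
  rw [add_zero] at hlim
  exact hlim.congr' ((hν.deriv_bernstein_eqOn hφ).symm.eventuallyEq_of_mem (Ioi_mem_atTop 0))

end IsBernsteinLevyMeasure

/-- If `φ` is a Bernstein function with representation
`φ(λ) = a + bλ + ∫ (1 − e^{−λs}) μ(ds)` and `−φ'' ∈ WUSC(β−2, C, x₀)` with `β < 1`,
then `φ'(x) ≤ (C/(1−β)) x (−φ''(x)) + b` for all `x > x₀`. -/
theorem bernstein_deriv_upper_bound_of_wusc
    (φ : ℝ → ℝ) (a b : ℝ) (μ : Measure ℝ) (β C x₀ : ℝ)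
    (ha : 0 ≤ a) (hb : 0 ≤ b)
    (hμfin : ∫⁻ s in Ioi (0:ℝ), ENNReal.ofReal (min 1 s) ∂μ ≠ ⊤)
    (hφ : ∀ x : ℝ, 0 < x →
      φ x = a + b * x + ∫ s in Ioi (0:ℝ), (1 - Real.exp (-x * s)) ∂μ)
    (hβ : β < 1) (hC : 1 ≤ C) (hx₀ : 0 ≤ x₀)
    (hscal : WUSC (fun x => -(deriv (deriv φ) x)) (β - 2) C x₀) :
    ∀ x : ℝ, x₀ < x →
      deriv φ x ≤ C / (1 - β) * (x * -(deriv (deriv φ) x)) + b :=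
  have hν := IsBernsteinLevyMeasure.restrict_Ioi hμfin
  bernstein_deriv_upper_bound_of_wusc_general
    ((hν.differentiableOn_deriv_bernstein hφ).mono (Ioi_subset_Ioi hx₀))
    (hν.tendsto_deriv_bernstein_atTop hφ) hβ hx₀ hscal
end
end
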